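/- arXiv:2108.13652 — 2 statements merged into one kernel-verified Lean document; each statement's English description precedes it below -/
import Mathlib

section
/- Let k be an algebraically closed field of characteristic 3 and let g = sl_3(k) be the Lie algebra of traceless 3×3 matrices over k. Then the second Chevalley–Eilenberg cohomology of g with trivial coefficients satisfies dim_k H^2(g, k) = 6. -/
/-! Chevalley–Eilenberg cohomology of a Lie algebra with coefficients in a module. -/

section ChevalleyEilenberg

variable (k : Type*) [Field k]
variable (g : Type*) [LieRing g] [LieAlgebra k g]
variable (M : Type*) [AddCommGroup M] [Module k M] [LieRingModule g M] [LieModule k g M]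

/-- The Chevalley–Eilenberg differential, as a raw function from alternating `n`-cochains
to `(n+1)`-ary functions:
`dψ(l₀,…,lₙ) = Σ_{i<j} (−1)^{i+j} ψ(⁅lᵢ,lⱼ⁆, …, l̂ᵢ, …, l̂ⱼ, …) + Σ_i (−1)^i ⁅lᵢ, ψ(…, l̂ᵢ, …)⁆`
(indices written from 0; this is the paper's formula with 1-based indices shifted by one). -/
def ceD : ∀ {n : ℕ}, (g [⋀^Fin n]→ₗ[k] M) → ((Fin (n + 1) → g) → M)
  | 0, ψ, v => ⁅v 0, ψ ![]⁆
  | (n + 1), ψ, v =>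
      (∑ i : Fin (n + 2), ∑ j : Fin (n + 2),
        if h : i < j then
          ((-1 : ℤ) ^ (i.val + j.val)) •
            ψ (Fin.cons ⁅v i, v j⁆
              (fun l => v (i.succAbove
                ((j.pred (Fin.pos_iff_ne_zero.mp (lt_of_le_of_lt i.zero_le h))).succAbove l))))
        else 0)
      + ∑ i : Fin (n + 2), ((-1 : ℤ) ^ i.val) • ⁅v i, ψ (fun l => v (i.succAbove l))⁆

variable {k g M}

private lemma dite_add_zero {P : Prop} [Decidable P] {N : Type*} [AddZeroClass N]
    (A B : P → N) :
    (dite P (fun h => A h + B h) fun _ => 0) =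
      (dite P A fun _ => 0) + (dite P B fun _ => 0) := by
  split_ifs <;> simp

private lemma dite_smul_zero {P : Prop} [Decidable P] {N : Type*} [AddCommGroup N] [Module k N]
    (c : k) (A : P → N) :
    (dite P (fun h => c • A h) fun _ => 0) = c • dite P A fun _ => 0 := by
  split_ifs <;> simp

lemma ceD_add {n : ℕ} (ψ φ : g [⋀^Fin n]→ₗ[k] M) (v : Fin (n + 1) → g) :
    ceD k g M (ψ + φ) v = ceD k g M ψ v + ceD k g M φ v := by
  cases n with
  | zero => simp [ceD]
  | succ n =>
    simp only [ceD, AlternatingMap.add_apply, smul_add, lie_add, dite_add_zero,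
      Finset.sum_add_distrib]
    abel

lemma ceD_smul {n : ℕ} (c : k) (ψ : g [⋀^Fin n]→ₗ[k] M) (v : Fin (n + 1) → g) :
    ceD k g M (c • ψ) v = c • ceD k g M ψ v := by
  cases n with
  | zero => simp [ceD]
  | succ n =>
    simp only [ceD, AlternatingMap.smul_apply, lie_smul, smul_comm _ c, dite_smul_zero,
      ← Finset.smul_sum, smul_add]

lemma ceD_zero {n : ℕ} (v : Fin (n + 1) → g) :
    ceD k g M (0 : g [⋀^Fin n]→ₗ[k] M) v = 0 := by
  cases n with
  | zero => simp [ceD]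
  | succ n => simp [ceD]

variable (k g M)

/-- The space of Chevalley–Eilenberg `n`-cocycles `Zⁿ(g, M)`. -/
def ceZ (n : ℕ) : Submodule k (g [⋀^Fin n]→ₗ[k] M) where
  carrier := {ψ | ∀ v, ceD k g M ψ v = 0}
  add_mem' := by
    intro ψ φ hψ hφ v
    rw [ceD_add, hψ v, hφ v, add_zero]
  zero_mem' := fun v => ceD_zero v
  smul_mem' := by
    intro c ψ hψ v
    rw [ceD_smul, hψ v, smul_zero]

/-- The space of Chevalley–Eilenberg `n`-coboundaries `Bⁿ(g, M)`: in positive degree, the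
alternating `n`-cochains that agree (as functions) with `dφ` for some `(n-1)`-cochain `φ`. -/
def ceB : (n : ℕ) → Submodule k (g [⋀^Fin n]→ₗ[k] M)
  | 0 => ⊥
  | (n + 1) =>
      { carrier := {ψ | ∃ φ : g [⋀^Fin n]→ₗ[k] M, ∀ v, ψ v = ceD k g M φ v}
        add_mem' := by
          rintro ψ χ ⟨φ₁, h₁⟩ ⟨φ₂, h₂⟩
          exact ⟨φ₁ + φ₂, fun v => by
            rw [AlternatingMap.add_apply, h₁ v, h₂ v, ceD_add]⟩
        zero_mem' := ⟨0, fun v => by rw [AlternatingMap.zero_apply, ceD_zero]⟩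
        smul_mem' := by
          rintro c ψ ⟨φ, h⟩
          exact ⟨c • φ, fun v => by rw [AlternatingMap.smul_apply, h v, ceD_smul]⟩ }

/-- The `n`-th Chevalley–Eilenberg cohomology space `Hⁿ(g, M)`: the quotient of the space of
`n`-cocycles by the space of `n`-coboundaries (viewed inside the cocycles). -/
abbrev ceH (n : ℕ) : Type _ :=
  ↥(ceZ k g M n) ⧸ (ceB k g M n).comap (ceZ k g M n).subtype

end ChevalleyEilenberg

/-- The Lie algebra `sl₃(k)` of traceless `3 × 3` matrices over `k`. -/
abbrev sl3 (k : Type*) [Field k] := ↥(LieAlgebra.SpecialLinear.sl (Fin 3) k)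

/-- `k` as the trivial one-dimensional module over `sl₃(k)` (zero bracket action). -/
instance (k : Type*) [Field k] : LieRingModule (sl3 k) k where
  bracket _ _ := 0
  add_lie _ _ _ := by simp
  lie_add _ _ _ := by simp
  leibniz_lie _ _ _ := by simp

instance (k : Type*) [Field k] : LieModule k (sl3 k) k where
  smul_lie _ _ _ := by simp [Bracket.bracket]
  lie_smul _ _ _ := by simp [Bracket.bracket]

/-!
Over any field, a 2-cochain of `𝔰𝔩₃` with trivial coefficients can be corrected by a coboundary so
that it vanishes on the pairs `(E_ij, E_jl)` with `i, j, l` distinct and on `(E_0j, E_j0)`. For a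
cocycle normalized in this way, all values are then determined by those on the six commuting pairs
`(E_ij, E_il)` and `(E_ji, E_li)`; on these pairs coboundaries vanish, so `dim H² ≤ 6`.

The bound is attained in characteristic 3. For a 3-form `D` on a module that is invariant under the
Lie algebra, the coboundary of `(x, y) ↦ D (v, x v, y v)` is `(x, y, z) ↦ D (x v, y v, z v)` up to a
factor `±3`. Taking `D = det` on `k³` gives cocycles whose value on `(E_ji, E_li)` is `v_i³`, and
precomposing them with `x ↦ -xᵀ` gives the values `v_i³` on the pairs `(E_ij, E_il)`.
-/

open LieModule.Cohomology LieAlgebra.SpecialLinear Matrix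

section AlternatingPairs

variable {R V W M : Type*} [CommRing R] [AddCommGroup V] [Module R V] [AddCommGroup W] [Module R W]
variable [AddCommGroup M] [Module R M]

/-- An alternating map in two variables regarded as a bilinear map. -/
def curryPair (ψ : V [⋀^Fin 2]→ₗ[R] M) : V →ₗ[R] V →ₗ[R] M :=
  LinearMap.mk₂ R (fun x y ↦ ψ ![x, y])
    (fun x x' y ↦ ψ.map_vecCons_add ![y] x x') (fun c x y ↦ ψ.map_vecCons_smul ![y] c x)
    (fun x y y' ↦ (ψ.curryLeft x).map_vecCons_add ![] y y')
    (fun c x y ↦ (ψ.curryLeft x).map_vecCons_smul ![] c y)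

lemma curryPair_apply (ψ : V [⋀^Fin 2]→ₗ[R] M) (x y : V) : curryPair ψ x y = ψ ![x, y] :=
  rfl

lemma curryPair_self (ψ : V [⋀^Fin 2]→ₗ[R] M) (x : V) : curryPair ψ x x = 0 :=
  ψ.map_eq_zero_of_eq ![x, x] (i := 0) (j := 1) rfl (by decide)

lemma curryPair_apply_zero_one (ψ : V [⋀^Fin 2]→ₗ[R] M) (v : Fin 2 → V) :
    curryPair ψ (v 0) (v 1) = ψ v := by
  rw [curryPair_apply]
  congr 1
  ext i
  fin_cases i <;> rfl

lemma compLinearMap_pair (ψ : V [⋀^Fin 2]→ₗ[R] M) (f : W →ₗ[R] V) (x y : W) :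
    ψ.compLinearMap f ![x, y] = ψ ![f x, f y] :=
  (curryPair_apply_zero_one ψ fun i ↦ f (![x, y] i)).symm

lemma map_triple_swap_left (D : V [⋀^Fin 3]→ₗ[R] M) (x y z : V) :
    D ![y, x, z] = -D ![x, y, z] := by
  rw [← D.map_swap _ (show (0 : Fin 3) ≠ 1 by decide)]
  congr 1
  ext i
  fin_cases i <;> rfl

lemma map_triple_swap_right (D : V [⋀^Fin 3]→ₗ[R] M) (x y z : V) :
    D ![x, z, y] = -D ![x, y, z] := by
  rw [← D.map_swap _ (show (1 : Fin 3) ≠ 2 by decide)]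
  congr 1
  ext i
  fin_cases i <;> rfl

end AlternatingPairs

section TwoCochains

variable {k g M : Type*} [CommRing k] [LieRing g] [LieAlgebra k g]
variable [AddCommGroup M] [Module k M]

/-- An alternating 2-cochain regarded as one of Mathlib's bilinear 2-cochains. -/
def toTwoCochain (ψ : g [⋀^Fin 2]→ₗ[k] M) : twoCochain k g M where
  val := curryPair ψ
  property := curryPair_self ψ

lemma toTwoCochain_apply (ψ : g [⋀^Fin 2]→ₗ[k] M) (x y : g) : toTwoCochain ψ x y = ψ ![x, y] :=
  rfl

lemma twoCochain_apply_eq_zero_of_fin_three (a : twoCochain k g M) {e : Fin 3 → g} {i : Fin 3}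
    (hi : e i = 0) (h : a (e (i + 1)) (e (i + 2)) = 0) (j l : Fin 3) : a (e j) (e l) = 0 := by
  have cover : ∀ i j : Fin 3, j = i ∨ j = i + 1 ∨ j = i + 2 := by decide
  have h' : a (e (i + 2)) (e (i + 1)) = 0 := by rw [← twoCochain_skew, h, neg_zero]
  rcases cover i j with hj | hj | hj <;> rcases cover i l with hl | hl | hl <;> simp [*]

lemma twoCocycle_apply_lie_eq_zero [LieRingModule g M] [LieModule k g M] [LieModule.IsTrivial g M]
    {b : twoCochain k g M} (hb : b ∈ twoCocycle k g M) {x y z : g}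
    {c d : k} (hy : ⁅x, y⁆ = c • y) (hz : ⁅x, z⁆ = d • z) (h : b y z = 0) : b x ⁅y, z⁆ = 0 := by
  rw [(mem_twoCocycle_iff_of_trivial k g M b).1 hb, hy, hz, map_smul, map_smul,
    LinearMap.smul_apply, h, smul_zero, smul_zero, add_zero]

end TwoCochains

section LowDegree

variable {k g M : Type*} [Field k] [LieRing g] [LieAlgebra k g]
variable [AddCommGroup M] [Module k M] [LieRingModule g M] [LieModule k g M]

lemma ceD_one (φ : g →ₗ[k] M) (v : Fin 2 → g) :
    ceD k g M (AlternatingMap.ofSubsingleton k g M 0 φ) v = d₁₂ k g M φ (v 0) (v 1) := by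
  have expand : ceD k g M (AlternatingMap.ofSubsingleton k g M 0 φ) v =
      -φ ⁅v 0, v 1⁆ + (⁅v 0, φ (v 1)⁆ - ⁅v 1, φ (v 0)⁆) := by
    simp [ceD, Fin.sum_univ_two, sub_eq_add_neg]
  rw [expand, d₁₂_apply_apply]
  abel

lemma ceD_two (ψ : g [⋀^Fin 2]→ₗ[k] M) (v : Fin 3 → g) :
    ceD k g M ψ v = d₂₃ k g M (toTwoCochain ψ) (v 0) (v 1) (v 2) := by
  have expand : ceD k g M ψ v =
      -curryPair ψ ⁅v 0, v 1⁆ (v 2) + curryPair ψ ⁅v 0, v 2⁆ (v 1) +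
        -curryPair ψ ⁅v 1, v 2⁆ (v 0) + (⁅v 0, curryPair ψ (v 1) (v 2)⁆ +
        -⁅v 1, curryPair ψ (v 0) (v 2)⁆ + ⁅v 2, curryPair ψ (v 0) (v 1)⁆) := by
    simp [ceD, ← curryPair_apply_zero_one, Fin.sum_univ_three, Fin.succAbove]
  simp only [expand, d₂₃_apply, toTwoCochain_apply, curryPair_apply]
  abel

lemma mem_ceZ_two_iff (ψ : g [⋀^Fin 2]→ₗ[k] M) :
    ψ ∈ ceZ k g M 2 ↔ toTwoCochain ψ ∈ twoCocycle k g M := by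
  rw [mem_twoCocycle_iff]
  refine ⟨fun h ↦ ?_, fun h v ↦ ?_⟩
  · ext x y z
    exact (ceD_two ψ ![x, y, z]).symm.trans (h _)
  · rw [ceD_two, h]
    rfl

lemma mem_ceB_two_iff (ψ : g [⋀^Fin 2]→ₗ[k] M) :
    ψ ∈ ceB k g M 2 ↔ ∃ f : g →ₗ[k] M, toTwoCochain ψ = d₁₂ k g M f := by
  refine (AlternatingMap.ofSubsingleton k g M (0 : Fin 1)).surjective.exists.trans ?_
  refine exists_congr fun f ↦ ⟨fun h ↦ ?_, fun h v ↦ ?_⟩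
  · ext x y
    exact (h ![x, y]).trans (ceD_one f ![x, y])
  · rw [ceD_one, ← h]
    exact (curryPair_apply_zero_one ψ v).symm

end LowDegree

section TrivialCoefficients

variable {k g M : Type*} [Field k] [LieRing g] [LieAlgebra k g]
variable [AddCommGroup M] [Module k M] [LieRingModule g M] [LieModule k g M]
variable [LieModule.IsTrivial g M]

lemma mem_ceZ_two_iff_of_trivial (ψ : g [⋀^Fin 2]→ₗ[k] M) :
    ψ ∈ ceZ k g M 2 ↔ ∀ x y z, ψ ![x, ⁅y, z⁆] = ψ ![⁅x, y⁆, z] + ψ ![y, ⁅x, z⁆] :=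
  (mem_ceZ_two_iff ψ).trans (mem_twoCocycle_iff_of_trivial k g M _)

lemma compLinearMap_mem_ceZ_two {g' : Type*} [LieRing g'] [LieAlgebra k g'] [LieRingModule g' M]
    [LieModule k g' M] [LieModule.IsTrivial g' M] {ψ : g [⋀^Fin 2]→ₗ[k] M}
    (hψ : ψ ∈ ceZ k g M 2) (σ : g' →ₗ⁅k⁆ g) :
    ψ.compLinearMap (σ : g' →ₗ[k] g) ∈ ceZ k g' M 2 := by
  rw [mem_ceZ_two_iff_of_trivial] at hψ ⊢
  intro x y z
  simpa only [compLinearMap_pair, LieHom.coe_toLinearMap, LieHom.map_lie] using hψ (σ x) (σ y) (σ z)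

end TrivialCoefficients

section OrbitForm

variable {k g V M : Type*} [CommRing k] [LieRing g] [LieAlgebra k g]
variable [AddCommGroup V] [Module k V] [LieRingModule g V] [LieModule k g V]
variable [AddCommGroup M] [Module k M]

/-- The 2-cochain `(x, y) ↦ D (v, x v, y v)`: the 3-form `D` with `v` inserted, pulled back along
the orbit map `x ↦ x v`. -/
def orbitForm (D : V [⋀^Fin 3]→ₗ[k] M) (v : V) : g [⋀^Fin 2]→ₗ[k] M :=
  (D.curryLeft v).compLinearMap ((LieModule.toEnd k g V : g →ₗ[k] Module.End k V).flip v)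

lemma orbitForm_apply (D : V [⋀^Fin 3]→ₗ[k] M) (v : V) (x y : g) :
    orbitForm D v ![x, y] = D ![v, ⁅x, v⁆, ⁅y, v⁆] := by
  rw [orbitForm, compLinearMap_pair]
  rfl

lemma orbitForm_apply_lie {D : V [⋀^Fin 3]→ₗ[k] M}
    (hD : ∀ (x : g) (a b c : V), D ![⁅x, a⁆, b, c] + D ![a, ⁅x, b⁆, c] + D ![a, b, ⁅x, c⁆] = 0)
    (v : V) (x y z : g) :
    orbitForm D v ![x, ⁅y, z⁆] = orbitForm D v ![⁅x, y⁆, z] + orbitForm D v ![y, ⁅x, z⁆] +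
      (3 : k) • D ![⁅x, v⁆, ⁅y, v⁆, ⁅z, v⁆] := by
  have curry (a b : V) : D ![v, a, b] = curryPair (D.curryLeft v) a b := rfl
  have hx := hD x v ⁅y, v⁆ ⁅z, v⁆
  have hy := hD y v ⁅x, v⁆ ⁅z, v⁆
  have hz := hD z v ⁅x, v⁆ ⁅y, v⁆
  rw [map_triple_swap_left] at hy
  rw [map_triple_swap_left, map_triple_swap_right, neg_neg,
    map_triple_swap_right D v ⁅y, v⁆ ⁅z, ⁅x, v⁆⁆] at hz
  simp only [curry] at hx hy hz
  simp only [orbitForm_apply, curry, lie_lie, map_sub, LinearMap.sub_apply]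
  linear_combination (norm := module) hy - hx - hz

end OrbitForm

lemma orbitForm_mem_ceZ {k g V M : Type*} [Field k] [CharP k 3] [LieRing g] [LieAlgebra k g]
    [AddCommGroup V] [Module k V] [LieRingModule g V] [LieModule k g V]
    [AddCommGroup M] [Module k M] [LieRingModule g M] [LieModule k g M] [LieModule.IsTrivial g M]
    {D : V [⋀^Fin 3]→ₗ[k] M}
    (hD : ∀ (x : g) (a b c : V), D ![⁅x, a⁆, b, c] + D ![a, ⁅x, b⁆, c] + D ![a, b, ⁅x, c⁆] = 0)
    (v : V) : orbitForm D v ∈ ceZ k g M 2 := by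
  have h3 : (3 : k) = 0 := mod_cast CharP.cast_eq_zero k 3
  rw [mem_ceZ_two_iff_of_trivial]
  intro x y z
  rw [orbitForm_apply_lie hD, h3, zero_smul, add_zero]

section SpecialLinear

variable {n R : Type*} [Fintype n] [DecidableEq n] [CommRing R]

/-- The involution `x ↦ -xᵀ` of `𝔰𝔩ₙ`, exchanging row and column root vectors. -/
def negTranspose : sl n R →ₗ⁅R⁆ sl n R where
  toFun x := ⟨-x.1ᵀ, by
    have hx : trace x.1 = 0 := x.2
    change trace (-x.1ᵀ) = 0
    rw [trace_neg, trace_transpose, hx, neg_zero]⟩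
  map_add' x y := Subtype.ext <| by
    change -(x.1 + y.1)ᵀ = -x.1ᵀ + -y.1ᵀ
    rw [transpose_add, neg_add]
  map_smul' c x := Subtype.ext <| by
    change -(c • x.1)ᵀ = c • -x.1ᵀ
    rw [transpose_smul, smul_neg]
  map_lie' {x y} := Subtype.ext <| by
    change -⁅x.1, y.1⁆ᵀ = ⁅-x.1ᵀ, -y.1ᵀ⁆
    rw [lie_transpose]
    simp only [Ring.lie_def, neg_mul_neg, neg_sub]

/-- The matrix unit `E_ij` as an element of `𝔰𝔩ₙ`, with the junk value `0` for `i = j`. -/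
def rootVector (i j : n) : sl n R := if h : i ≠ j then single i j h 1 else 0

lemma rootVector_of_ne {i j : n} (h : i ≠ j) : (rootVector i j : sl n R) = single i j h 1 :=
  dif_pos h

lemma rootVector_self (i : n) : (rootVector i i : sl n R) = 0 :=
  dif_neg (not_not_intro rfl)

lemma lie_rootVector_rootVector {i j l : n} (hij : i ≠ j) (hjl : j ≠ l) (hil : i ≠ l) :
    ⁅(rootVector i j : sl n R), (rootVector j l : sl n R)⁆ = rootVector i l := by
  ext : 1
  simp [rootVector_of_ne, *, Ring.lie_def, hil.symm]

lemma lie_rootVector_rootVector_swap {i j : n} (hij : i ≠ j) :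
    ⁅(rootVector i j : sl n R), (rootVector j i : sl n R)⁆ = singleSubSingle i j 1 := by
  ext : 1
  simp [rootVector_of_ne, hij, hij.symm, Ring.lie_def]

lemma lie_rootVector_same_row (i j l : n) :
    ⁅(rootVector i j : sl n R), (rootVector i l : sl n R)⁆ = 0 := by
  obtain rfl | hij := eq_or_ne i j
  · rw [rootVector_self, zero_lie]
  obtain rfl | hil := eq_or_ne i l
  · rw [rootVector_self, lie_zero]
  ext : 1
  simp [rootVector_of_ne, *, hij.symm, hil.symm, Ring.lie_def]

lemma lie_rootVector_same_col (i j l : n) :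
    ⁅(rootVector j i : sl n R), (rootVector l i : sl n R)⁆ = 0 := by
  obtain rfl | hji := eq_or_ne j i
  · rw [rootVector_self, zero_lie]
  obtain rfl | hli := eq_or_ne l i
  · rw [rootVector_self, lie_zero]
  ext : 1
  simp [rootVector_of_ne, *, hji.symm, hli.symm, Ring.lie_def]

lemma lie_rootVector_of_isDiag {x : sl n R} (hx : x.1.IsDiag) (i j : n) :
    ⁅x, (rootVector i j : sl n R)⁆ = (x.1 i i - x.1 j j) • (rootVector i j : sl n R) := by
  obtain rfl | hij := eq_or_ne i j
  · simp [rootVector_self]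
  ext : 1
  simp only [rootVector_of_ne hij, sl_bracket]
  rw [← hx.diagonal_diag]
  ext a b
  simp only [val_single, Matrix.sub_apply, diagonal_mul, mul_diagonal, single_apply, diag_apply,
    diagonal_apply_eq, SetLike.val_smul, Matrix.smul_apply, smul_eq_mul]
  grind

lemma isDiag_singleSubSingle (i j : n) (r : R) : (singleSubSingle i j r).1.IsDiag := by
  intro a b hab
  simp only [val_singleSubSingle, Matrix.sub_apply, Matrix.single_apply]
  grind

lemma negTranspose_rootVector (i j : n) :
    negTranspose (rootVector i j : sl n R) = -rootVector j i := by
  obtain rfl | hij := eq_or_ne i j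
  · simp [rootVector_self]
  · ext : 1
    simp [rootVector_of_ne, hij, hij.symm, negTranspose]

lemma eq_sum_rootVector_sub_sum_singleSubSingle (o : n) (x : sl n R) :
    x = ∑ i, ∑ j, x.1 i j • rootVector i j - ∑ j, x.1 j j • singleSubSingle o j 1 := by
  have hx : ∑ j, x.1 j j = 0 := x.2
  have hoff (i j : n) : x.1 i j • (rootVector i j : sl n R).1 =
      Matrix.single i j (x.1 i j) - if i = j then Matrix.single i i (x.1 i i) else 0 := by
    obtain rfl | hij := eq_or_ne i j
    · simp [rootVector_self]
    · simp [rootVector_of_ne, hij]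
  apply Subtype.ext
  have hdiag : ∑ j, Matrix.single o o (x.1 j j) = 0 :=
    (map_sum (singleAddMonoidHom (α := R) o o) _ _).symm.trans (by rw [hx, map_zero])
  simp only [AddSubgroupClass.coe_sub, AddSubmonoidClass.coe_finsetSum, SetLike.val_smul, hoff,
    Finset.sum_sub_distrib, Finset.sum_ite_eq, Finset.mem_univ, if_true, val_singleSubSingle,
    smul_sub, smul_single, smul_eq_mul, mul_one, sub_sub_sub_cancel_right]
  rw [← matrix_eq_sum_single, hdiag, sub_zero]

lemma linearMap_eq_zero_of_rootVector {M : Type*} [AddCommGroup M] [Module R M] (o : n)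
    {f : sl n R →ₗ[R] M} (hroot : ∀ i j, f (rootVector i j) = 0)
    (hcartan : ∀ j, j ≠ o → f (singleSubSingle o j 1) = 0) : f = 0 := by
  have hcartan' (j : n) : f (singleSubSingle o j 1) = 0 := by
    obtain rfl | hj := eq_or_ne j o
    · have hzero : singleSubSingle j j (1 : R) = 0 := Subtype.ext (sub_self _)
      rw [hzero, map_zero]
    · exact hcartan j hj
  ext x
  rw [eq_sum_rootVector_sub_sum_singleSubSingle o x]
  simp only [map_sub, map_sum, map_smul, hroot, hcartan', smul_zero, Finset.sum_const_zero,
    sub_zero, LinearMap.zero_apply]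

lemma exists_linearMap_apply_rootVector (c : Matrix n n R) :
    ∃ f : sl n R →ₗ[R] R, (∀ i j, i ≠ j → f (rootVector i j) = c i j) ∧
      ∀ i j, f (singleSubSingle i j 1) = c i i - c j j := by
  refine ⟨traceLinearMap n R R ∘ₗ LinearMap.mulLeft R cᵀ ∘ₗ
    (sl n R : Submodule R (Matrix n n R)).subtype, fun i j hij ↦ ?_, fun i j ↦ ?_⟩
  · change trace (cᵀ * (rootVector i j : sl n R).1) = c i j
    simp [rootVector_of_ne hij, trace_mul_single]
  · change trace (cᵀ * (singleSubSingle i j 1).1) = c i i - c j j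
    simp [mul_sub, trace_mul_single]

lemma sum_det_updateRow_mulVec (A B : Matrix n n R) :
    ∑ i, (B.updateRow i (A *ᵥ B i)).det = A.trace * B.det := by
  calc ∑ i, (B.updateRow i (A *ᵥ B i)).det = (Bᵀ.adjugate * (A * Bᵀ)).trace := by
        refine Finset.sum_congr rfl fun i _ ↦ ?_
        rw [← cramer_transpose_apply, cramer_eq_adjugate_mulVec]
        rfl
    _ = A.trace * B.det := by
        rw [trace_mul_comm, mul_assoc, mul_adjugate, det_transpose, Matrix.mul_smul, mul_one,
          trace_smul, smul_eq_mul, mul_comm]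

end SpecialLinear

section SL3

variable {k : Type*} [Field k]

instance : LieModule.IsTrivial (sl3 k) k := ⟨fun _ _ ↦ rfl⟩

lemma detRowAlternating_lie (x : sl3 k) (a b c : Fin 3 → k) :
    detRowAlternating ![⁅x, a⁆, b, c] + detRowAlternating ![a, ⁅x, b⁆, c] +
      detRowAlternating ![a, b, ⁅x, c⁆] = (0 : k) := by
  have hx : x.1.trace = 0 := x.2
  have h := sum_det_updateRow_mulVec x.1 (of ![a, b, c])
  rw [hx, zero_mul, Fin.sum_univ_three] at h
  convert h using 3 <;> refine congrArg det ?_ <;> ext i : 1 <;> fin_cases i <;> rfl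

/-- The 2-cochain `(x, y) ↦ det (v, x v, y v)`, a cocycle in characteristic 3. Modulo coboundaries
these cocycles then form the Frobenius twist of the natural module. -/
def columnCocycle (v : Fin 3 → k) : sl3 k [⋀^Fin 2]→ₗ[k] k :=
  orbitForm detRowAlternating v

/-- The pullback of `columnCocycle v` along `x ↦ -xᵀ`. In characteristic 3 these yield, modulo
coboundaries, the Frobenius twist of the dual of the natural module. -/
def rowCocycle (v : Fin 3 → k) : sl3 k [⋀^Fin 2]→ₗ[k] k :=
  (columnCocycle v).compLinearMap (negTranspose : sl3 k →ₗ⁅k⁆ sl3 k)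

/-- The values of a 2-cochain on the commuting pairs `(E_ij, E_il)` (left summand) and
`(E_ji, E_li)` (right summand), where `j = i + 1` and `l = i + 2` modulo 3. In characteristic 3
they are coordinates on the second cohomology. -/
def commutingPairValues : (sl3 k [⋀^Fin 2]→ₗ[k] k) →ₗ[k] (Fin 3 ⊕ Fin 3 → k) where
  toFun ψ := Sum.elim (fun i ↦ ψ ![rootVector i (i + 1), rootVector i (i + 2)])
    (fun i ↦ ψ ![rootVector (i + 1) i, rootVector (i + 2) i])
  map_add' _ _ := by ext (i | i) <;> rfl
  map_smul' _ _ := by ext (i | i) <;> rfl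

lemma commutingPairValues_inl (ψ : sl3 k [⋀^Fin 2]→ₗ[k] k) (i : Fin 3) :
    commutingPairValues ψ (Sum.inl i) = ψ ![rootVector i (i + 1), rootVector i (i + 2)] :=
  rfl

lemma commutingPairValues_inr (ψ : sl3 k [⋀^Fin 2]→ₗ[k] k) (i : Fin 3) :
    commutingPairValues ψ (Sum.inr i) = ψ ![rootVector (i + 1) i, rootVector (i + 2) i] :=
  rfl

lemma commutingPairValues_eq_zero_iff (ψ : sl3 k [⋀^Fin 2]→ₗ[k] k) :
    commutingPairValues ψ = 0 ↔ ∀ i j l, ψ ![rootVector i j, rootVector i l] = 0 ∧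
      ψ ![rootVector j i, rootVector l i] = 0 := by
  refine ⟨fun h i j l ↦ ?_, fun h ↦ ?_⟩
  · exact ⟨twoCochain_apply_eq_zero_of_fin_three (toTwoCochain ψ) (e := fun j ↦ rootVector i j)
        (rootVector_self i) (congrFun h (Sum.inl i)) j l,
      twoCochain_apply_eq_zero_of_fin_three (toTwoCochain ψ) (e := fun j ↦ rootVector j i)
        (rootVector_self i) (congrFun h (Sum.inr i)) j l⟩
  · ext (i | i)
    · exact (h i _ _).1
    · exact (h i _ _).2

lemma lie_rootVector_apply {i j : Fin 3} (hij : i ≠ j) (v : Fin 3 → k) :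
    ⁅(rootVector i j : sl3 k), v⁆ = Pi.single i (v j) := by
  rw [rootVector_of_ne hij]
  change Matrix.single i j 1 *ᵥ v = _
  rw [single_mulVec_eq, one_mul, ← Pi.single_smul, smul_eq_mul, mul_one]

lemma columnCocycle_rootVector {i j l m : Fin 3} (hij : i ≠ j) (hlm : l ≠ m) (v : Fin 3 → k) :
    columnCocycle v ![rootVector i j, rootVector l m] =
      det (of ![v, Pi.single i (v j), Pi.single l (v m)]) := by
  rw [columnCocycle, orbitForm_apply, lie_rootVector_apply hij, lie_rootVector_apply hlm]
  rfl

lemma commutingPairValues_columnCocycle (v : Fin 3 → k) :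
    commutingPairValues (columnCocycle v) = Sum.elim (fun _ ↦ 0) (fun i ↦ v i ^ 3) := by
  ext (i | i)
  · rw [commutingPairValues_inl,
      columnCocycle_rootVector (by fin_cases i <;> decide) (by fin_cases i <;> decide)]
    fin_cases i <;> simp [det_fin_three]
  · rw [commutingPairValues_inr,
      columnCocycle_rootVector (by fin_cases i <;> decide) (by fin_cases i <;> decide)]
    fin_cases i <;> simp [det_fin_three, pow_three']

lemma rowCocycle_rootVector (i j l m : Fin 3) (v : Fin 3 → k) :
    rowCocycle v ![rootVector i j, rootVector l m] =
      columnCocycle v ![rootVector j i, rootVector m l] := by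
  have h := compLinearMap_pair (columnCocycle v) (negTranspose : sl3 k →ₗ⁅k⁆ sl3 k).toLinearMap
    (rootVector i j) (rootVector l m)
  refine h.trans ?_
  rw [LieHom.coe_toLinearMap, negTranspose_rootVector, negTranspose_rootVector, ← curryPair_apply,
    map_neg, map_neg, LinearMap.neg_apply, neg_neg, curryPair_apply]

lemma commutingPairValues_rowCocycle (v : Fin 3 → k) :
    commutingPairValues (rowCocycle v) = Sum.elim (fun i ↦ v i ^ 3) (fun _ ↦ 0) := by
  have h := commutingPairValues_columnCocycle v
  ext (i | i)
  · rw [commutingPairValues_inl, rowCocycle_rootVector, ← commutingPairValues_inr, h]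
    rfl
  · rw [commutingPairValues_inr, rowCocycle_rootVector, ← commutingPairValues_inl, h]
    rfl

lemma columnCocycle_mem_ceZ [CharP k 3] (v : Fin 3 → k) : columnCocycle v ∈ ceZ k (sl3 k) k 2 :=
  orbitForm_mem_ceZ detRowAlternating_lie v

lemma rowCocycle_mem_ceZ [CharP k 3] (v : Fin 3 → k) : rowCocycle v ∈ ceZ k (sl3 k) k 2 :=
  compLinearMap_mem_ceZ_two (columnCocycle_mem_ceZ v) negTranspose

lemma surjective_commutingPairValues_domRestrict_ceZ [CharP k 3] :
    Function.Surjective (commutingPairValues.domRestrict (ceZ k (sl3 k) k 2)) := by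
  rw [← LinearMap.range_eq_top, eq_top_iff, ← (Pi.basisFun k (Fin 3 ⊕ Fin 3)).span_eq,
    Submodule.span_le]
  rintro _ ⟨i | i, rfl⟩
  · refine ⟨⟨rowCocycle (Pi.single i 1), rowCocycle_mem_ceZ _⟩, ?_⟩
    rw [LinearMap.domRestrict_apply, commutingPairValues_rowCocycle]
    ext (j | j) <;> simp [Pi.single_apply]
  · refine ⟨⟨columnCocycle (Pi.single i 1), columnCocycle_mem_ceZ _⟩, ?_⟩
    rw [LinearMap.domRestrict_apply, commutingPairValues_columnCocycle]
    ext (j | j) <;> simp [Pi.single_apply]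

lemma exists_linearMap_apply_lie_rootVector (a : twoCochain k (sl3 k) k) :
    ∃ f : sl3 k →ₗ[k] k, ∀ i j l, i ≠ j → j ≠ l → (i = l → i = 0) →
      f ⁅(rootVector i j : sl3 k), (rootVector j l : sl3 k)⁆ =
        a (rootVector i j) (rootVector j l) := by
  obtain ⟨f, hroot, hcartan⟩ := exists_linearMap_apply_rootVector fun i l : Fin 3 ↦
    if i = l then -a (rootVector 0 i) (rootVector i 0)
    else a (rootVector i (-(i + l))) (rootVector (-(i + l)) l)
  refine ⟨f, fun i j l hij hjl hil ↦ ?_⟩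
  obtain rfl | hne := eq_or_ne i l
  · obtain rfl := hil rfl
    rw [lie_rootVector_rootVector_swap hij, hcartan]
    simp [rootVector_self]
  · have hj : -(i + l) = j := by decide +revert
    rw [lie_rootVector_rootVector hij hjl hne, hroot i l hne, if_neg hne, hj]

section Rigidity

variable {b : twoCochain k (sl3 k) k} (hb : b ∈ twoCocycle k (sl3 k) k)
include hb

lemma apply_rootVector_swap_eq_zero
    (hopp : ∀ j, b (rootVector 0 j) (rootVector j 0) = 0) (i j : Fin 3) :
    b (rootVector i j) (rootVector j i) = 0 := by
  obtain rfl | hij := eq_or_ne i j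
  · simp [rootVector_self]
  obtain rfl | hi := eq_or_ne i 0
  · exact hopp j
  obtain rfl | hj := eq_or_ne j 0
  · rw [← twoCochain_skew, hopp, neg_zero]
  have h := (mem_twoCocycle_iff_of_trivial k (sl3 k) k b).1 hb (rootVector i 0) (rootVector 0 j)
    (rootVector j i)
  rw [lie_rootVector_rootVector hj.symm hij.symm hi.symm, lie_rootVector_rootVector hi hj.symm hij,
    ← lie_skew, lie_rootVector_rootVector hij.symm hi hj, map_neg, hopp, neg_zero, add_zero,
    ← twoCochain_skew, hopp, neg_zero] at h
  exact h.symm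

lemma apply_rootVector_rootVector_eq_zero
    (hchain : ∀ i j l, i ≠ j → j ≠ l → (i = l → i = 0) →
      b (rootVector i j) (rootVector j l) = 0)
    (hcomm : ∀ i j l, b (rootVector i j) (rootVector i l) = 0 ∧
      b (rootVector j i) (rootVector l i) = 0) (i j l m : Fin 3) :
    b (rootVector i j) (rootVector l m) = 0 := by
  have hopp (j : Fin 3) : b (rootVector 0 j) (rootVector j 0) = 0 := by
    obtain rfl | hj := eq_or_ne j 0
    · exact (hcomm 0 0 0).1
    · exact hchain 0 j 0 hj.symm hj fun _ ↦ rfl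
  have hprod (i j l : Fin 3) (hij : i ≠ j) (hjl : j ≠ l) :
      b (rootVector i j) (rootVector j l) = 0 := by
    obtain rfl | hil := eq_or_ne i l
    · exact apply_rootVector_swap_eq_zero hb hopp i j
    · exact hchain i j l hij hjl (absurd · hil)
  obtain rfl | hij := eq_or_ne i j
  · simp [rootVector_self]
  obtain rfl | hlm := eq_or_ne l m
  · simp [rootVector_self]
  have overlap : i = l ∨ j = m ∨ j = l ∨ m = i := by decide +revert
  rcases overlap with rfl | rfl | rfl | rfl
  · exact (hcomm i j m).1
  · exact (hcomm j i l).2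
  · exact hprod i j m hij hlm
  · rw [← twoCochain_skew, hprod l m j hlm hij, neg_zero]

lemma eq_zero_of_apply_rootVector_rootVector
    (hroot : ∀ i j l m, b (rootVector i j) (rootVector l m) = 0) : b = 0 := by
  have hdiag {x : sl3 k} (hx : x.1.IsDiag) : b x = 0 := by
    refine linearMap_eq_zero_of_rootVector 0 (fun i j ↦ ?_) fun j hj ↦ ?_
    · obtain rfl | hij := eq_or_ne i j
      · rw [rootVector_self, map_zero]
      obtain ⟨l, hil, hlj⟩ : ∃ l, i ≠ l ∧ l ≠ j := by decide +revert
      rw [← lie_rootVector_rootVector hil hlj hij]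
      exact twoCocycle_apply_lie_eq_zero hb (lie_rootVector_of_isDiag hx i l)
        (lie_rootVector_of_isDiag hx l j) (hroot ..)
    · rw [← lie_rootVector_rootVector_swap hj.symm]
      exact twoCocycle_apply_lie_eq_zero hb (lie_rootVector_of_isDiag hx 0 j)
        (lie_rootVector_of_isDiag hx j 0) (hroot ..)
  have hleft (i j : Fin 3) : b (rootVector i j) = 0 := by
    refine linearMap_eq_zero_of_rootVector 0 (hroot i j) fun l _ ↦ ?_
    rw [← twoCochain_skew, hdiag (isDiag_singleSubSingle 0 l 1), LinearMap.zero_apply, neg_zero]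
  apply Subtype.ext
  exact linearMap_eq_zero_of_rootVector 0 hleft fun j _ ↦ hdiag (isDiag_singleSubSingle 0 j 1)

end Rigidity

lemma exists_eq_d₁₂_of_apply_commuting {a : twoCochain k (sl3 k) k}
    (ha : a ∈ twoCocycle k (sl3 k) k)
    (hcomm : ∀ i j l, a (rootVector i j) (rootVector i l) = 0 ∧
      a (rootVector j i) (rootVector l i) = 0) :
    ∃ f : sl3 k →ₗ[k] k, a = d₁₂ k (sl3 k) k f := by
  obtain ⟨f, hf⟩ := exists_linearMap_apply_lie_rootVector a
  have hb : a + d₁₂ k (sl3 k) k f ∈ twoCocycle k (sl3 k) k :=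
    add_mem ha <| (mem_twoCocycle_iff ..).2 (LinearMap.congr_fun (d₂₃_comp_d₁₂ ..) f)
  have happly (x y : sl3 k) : (a + d₁₂ k (sl3 k) k f) x y = a x y - f ⁅x, y⁆ := by
    rw [add_apply_apply, d₁₂_apply_apply_ofTrivial, sub_eq_add_neg]
  have hzero : a + d₁₂ k (sl3 k) k f = 0 := by
    refine eq_zero_of_apply_rootVector_rootVector hb (apply_rootVector_rootVector_eq_zero hb ?_ ?_)
    · intro i j l hij hjl hil
      rw [happly, hf i j l hij hjl hil, sub_self]
    · intro i j l
      rw [happly, happly, lie_rootVector_same_row, lie_rootVector_same_col, map_zero, sub_zero,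
        sub_zero]
      exact hcomm i j l
  refine ⟨-f, ?_⟩
  ext x y
  rw [twoCochain_val_apply, twoCochain_val_apply, d₁₂_apply_apply_ofTrivial, LinearMap.neg_apply,
    neg_neg, ← sub_eq_zero, ← happly, hzero]
  rfl

lemma ker_commutingPairValues_domRestrict_ceZ :
    LinearMap.ker (commutingPairValues.domRestrict (ceZ k (sl3 k) k 2)) =
      (ceB k (sl3 k) k 2).comap (ceZ k (sl3 k) k 2).subtype := by
  ext ⟨ψ, hψ⟩
  rw [LinearMap.mem_ker, LinearMap.domRestrict_apply, commutingPairValues_eq_zero_iff,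
    Submodule.mem_comap, Submodule.subtype_apply, mem_ceB_two_iff]
  refine ⟨exists_eq_d₁₂_of_apply_commuting ((mem_ceZ_two_iff ψ).1 hψ), ?_⟩
  rintro ⟨f, hf⟩ i j l
  have hψf {x y : sl3 k} (hxy : ⁅x, y⁆ = 0) : ψ ![x, y] = 0 := by
    rw [← toTwoCochain_apply, hf, d₁₂_apply_apply_ofTrivial, hxy, map_zero, neg_zero]
  exact ⟨hψf (lie_rootVector_same_row i j l), hψf (lie_rootVector_same_col i j l)⟩

end SL3

theorem H2_trivial_coeffs_dim_general (k : Type*) [Field k] [CharP k 3] :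
    Module.finrank k (ceH k (sl3 k) k 2) = 6 := by
  have e : ceH k (sl3 k) k 2 ≃ₗ[k] (Fin 3 ⊕ Fin 3 → k) :=
    Submodule.quotEquivOfEq _ _ ker_commutingPairValues_domRestrict_ceZ.symm ≪≫ₗ
      LinearMap.quotKerEquivOfSurjective _ surjective_commutingPairValues_domRestrict_ceZ
  rw [e.finrank_eq, Module.finrank_fintype_fun_eq_card]
  rfl

theorem H2_trivial_coeffs_dim (k : Type*) [Field k] [IsAlgClosed k] [CharP k 3] :
    Module.finrank k (ceH k (sl3 k) k 2) = 6 :=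
  H2_trivial_coeffs_dim_general k
end

section
/- Let k be an algebraically closed field of characteristic 3 and let g = sl_3(k) be the Lie algebra of traceless 3×3 matrices over k. Then the fourth Chevalley–Eilenberg cohomology of g with trivial coefficients vanishes: H^4(g, k) = 0. -/
/-!
Write `ι_x` for contraction with `x` and `L_x = d ι_x + ι_x d` for the Lie derivative of cochains.
Let `h = coroot 0`. It acts semisimply on cochains with eigenvalues in `ZMod 3`, so by Fermat
`L_h ^ 2` is a projection, and Cartan's formula makes every cocycle that vanishes on the weight zero
part a coboundary. In the cyclic notation `e i = E i (i + 1)`, `f i = E (i + 1) i` every `e i` has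
weight `-1` and every `f i` has weight `1`, while the identity matrix `z` is traceless and central
because the characteristic is `3`.

The weight zero values of a `4`-cochain are those on `e ∧ e ∧ f ∧ f`, on `a ∧ e ∧ e ∧ e` and
`a ∧ f ∧ f ∧ f` with `a ∈ {z, h}`, and on `z ∧ h ∧ e ∧ f`. Subtracting a coboundary makes the values
on `e ∧ e ∧ f ∧ f` and on `a ∧ e ∧ e ∧ e` zero. For the resulting cocycle `χ`, the identities
`d (ι_a χ) = L_a χ` on `e ∧ e ∧ f ∧ f`, whose right-hand sides vanish, are linear equations that
force the remaining values to be zero.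
-/

section LieDerivative

variable {R L M N : Type*} [CommRing R] [LieRing L] [LieAlgebra R L]
  [AddCommGroup M] [Module R M] [AddCommGroup N] [Module R N]

open AlternatingMap

lemma curryLeft_curryLeft_swap {n : ℕ} (f : N [⋀^Fin (n + 2)]→ₗ[R] M) (x y : N) :
    (f.curryLeft x).curryLeft y = -(f.curryLeft y).curryLeft x := by
  have h := f.curryLeft_same (x + y)
  simp only [map_add, curryLeft_add, LinearMap.add_apply, curryLeft_same, zero_add, add_zero] at h
  exact eq_neg_of_add_eq_zero_left (by rwa [add_comm])

lemma curryLeft_ext {n : ℕ} {f f' : N [⋀^Fin (n + 1)]→ₗ[R] M}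
    (h : ∀ x, f.curryLeft x = f'.curryLeft x) : f = f' := by
  ext v
  rw [← Matrix.cons_head_tail v]
  exact DFunLike.congr_fun (h _) _

variable [LieRingModule L M] [LieModule R L M]

/-- The Lie derivative `⁅x, ψ⁆(v) = ⁅x, ψ v⁆ - ∑ⱼ ψ(v₀, …, ⁅x, vⱼ⁆, …)` of an alternating map, with
the bracket moved to the front of each summand so that the sum is visibly alternating. -/
instance cochainBracket : ∀ {n : ℕ}, Bracket L (L [⋀^Fin n]→ₗ[R] M)
  | 0 => ⟨fun x ψ => (LieModule.toEnd R L M x).compAlternatingMap ψ⟩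
  | _ + 1 => ⟨fun x ψ => (LieModule.toEnd R L M x).compAlternatingMap ψ -
      alternatizeUncurryFin (ψ.curryLeft ∘ₗ (LieAlgebra.ad R L x : L →ₗ[R] L))⟩

lemma cochain_zero_lie_apply (x : L) (ψ : L [⋀^Fin 0]→ₗ[R] M) (v : Fin 0 → L) :
    ⁅x, ψ⁆ v = ⁅x, ψ v⁆ := rfl

lemma cochain_succ_lie_apply {n : ℕ} (x : L) (ψ : L [⋀^Fin (n + 1)]→ₗ[R] M)
    (v : Fin (n + 1) → L) :
    ⁅x, ψ⁆ v = ⁅x, ψ v⁆ -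
      ∑ i : Fin (n + 1), (-1) ^ (i : ℕ) • ψ (Matrix.vecCons ⁅x, v i⁆ (i.removeNth v)) := by
  simp only [Bracket.bracket, AlternatingMap.sub_apply, alternatizeUncurryFin_apply]
  rfl

lemma curryLeft_lie {n : ℕ} (x y : L) (ψ : L [⋀^Fin (n + 1)]→ₗ[R] M) :
    ⁅x, ψ⁆.curryLeft y = ⁅x, ψ.curryLeft y⁆ - ψ.curryLeft ⁅x, y⁆ := by
  ext v
  cases n with
  | zero =>
    simp [cochain_succ_lie_apply, cochain_zero_lie_apply]
  | succ n =>
    have hcons (i : Fin (n + 1)) :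
        i.succ.removeNth (Matrix.vecCons y v) = Matrix.vecCons y (i.removeNth v) :=
      Fin.cons_comp_succ_succAbove y v i
    have htail : Fin.removeNth 0 (Matrix.vecCons y v) = v := rfl
    have hswap (i : Fin (n + 1)) (w : Fin n → L) :
      ψ (Matrix.vecCons ⁅x, v i⁆ (Matrix.vecCons y w)) =
        - ψ (Matrix.vecCons y (Matrix.vecCons ⁅x, v i⁆ w)) :=
      DFunLike.congr_fun (curryLeft_curryLeft_swap ψ _ y) w
    simp only [curryLeft_apply_apply, AlternatingMap.sub_apply, cochain_succ_lie_apply]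
    simp only [Fin.sum_univ_succ (n := n + 1), Fin.val_succ, Fin.val_zero, pow_succ, pow_zero,
      Matrix.cons_val_zero, Matrix.cons_val_succ, htail, hcons, hswap, one_smul, mul_neg_one,
      smul_neg, neg_smul, neg_neg]
    abel

private lemma cochain_add_lie {n : ℕ} (x y : L) (ψ : L [⋀^Fin n]→ₗ[R] M) :
    ⁅x + y, ψ⁆ = ⁅x, ψ⁆ + ⁅y, ψ⁆ := by
  induction n with
  | zero => ext v; simp [cochain_zero_lie_apply]
  | succ n ih =>
    refine curryLeft_ext fun z => ?_
    simp only [curryLeft_lie, curryLeft_add, LinearMap.add_apply, ih, add_lie, map_add]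
    abel

private lemma cochain_smul_lie {n : ℕ} (c : R) (x : L) (ψ : L [⋀^Fin n]→ₗ[R] M) :
    ⁅c • x, ψ⁆ = c • ⁅x, ψ⁆ := by
  induction n with
  | zero => ext v; simp [cochain_zero_lie_apply]
  | succ n ih =>
    refine curryLeft_ext fun z => ?_
    simp only [curryLeft_lie, curryLeft_smul, LinearMap.smul_apply, ih, smul_lie, map_smul,
      smul_sub]

private lemma cochain_lie_add {n : ℕ} (x : L) (ψ φ : L [⋀^Fin n]→ₗ[R] M) :
    ⁅x, ψ + φ⁆ = ⁅x, ψ⁆ + ⁅x, φ⁆ := by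
  induction n with
  | zero => ext v; simp [cochain_zero_lie_apply]
  | succ n ih =>
    refine curryLeft_ext fun z => ?_
    simp only [curryLeft_lie, curryLeft_add, LinearMap.add_apply, ih]
    abel

private lemma cochain_lie_smul {n : ℕ} (c : R) (x : L) (ψ : L [⋀^Fin n]→ₗ[R] M) :
    ⁅x, c • ψ⁆ = c • ⁅x, ψ⁆ := by
  induction n with
  | zero => ext v; simp [cochain_zero_lie_apply]
  | succ n ih =>
    refine curryLeft_ext fun z => ?_
    simp only [curryLeft_lie, curryLeft_smul, LinearMap.smul_apply, ih, smul_sub]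

private lemma cochain_lie_sub {n : ℕ} (x : L) (ψ φ : L [⋀^Fin n]→ₗ[R] M) :
    ⁅x, ψ - φ⁆ = ⁅x, ψ⁆ - ⁅x, φ⁆ := by
  rw [sub_eq_add_neg, ← neg_one_smul R φ, cochain_lie_add, cochain_lie_smul, neg_one_smul,
    ← sub_eq_add_neg]

private lemma cochain_leibniz_lie {n : ℕ} (x y : L) (ψ : L [⋀^Fin n]→ₗ[R] M) :
    ⁅x, ⁅y, ψ⁆⁆ = ⁅⁅x, y⁆, ψ⁆ + ⁅y, ⁅x, ψ⁆⁆ := by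
  induction n with
  | zero => ext v; simp [cochain_zero_lie_apply]
  | succ n ih =>
    refine curryLeft_ext fun z => ?_
    simp only [curryLeft_lie, curryLeft_add, LinearMap.add_apply, cochain_lie_sub, ih, lie_lie,
      map_sub]
    abel

instance cochainLieRingModule {n : ℕ} : LieRingModule L (L [⋀^Fin n]→ₗ[R] M) where
  add_lie := cochain_add_lie
  lie_add := cochain_lie_add
  leibniz_lie := cochain_leibniz_lie

instance cochainLieModule {n : ℕ} : LieModule R L (L [⋀^Fin n]→ₗ[R] M) where
  smul_lie := cochain_smul_lie
  lie_smul := cochain_lie_smul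

end LieDerivative

section Uncurry

variable {R M N : Type*} [CommRing R] [AddCommGroup M] [Module R M] [AddCommGroup N] [Module R N]

/-- The alternating map `v ↦ A (v 0) (v 1, …, v n)` attached to a linear family `A` of alternating
maps such that `A x` vanishes on the tuples containing `x`. -/
def alternatingUncurryLeft {n : ℕ} (A : N →ₗ[R] N [⋀^Fin n]→ₗ[R] M)
    (hA : ∀ (v : Fin n → N) (j : Fin n), A (v j) v = 0) : N [⋀^Fin (n + 1)]→ₗ[R] M where
  __ := (AlternatingMap.toMultilinearMapLM (S := R) ∘ₗ A).uncurryLeft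
  map_eq_zero_of_eq' v i j hv hij := by
    change A (v 0) (Fin.tail v) = 0
    cases i using Fin.cases with
    | zero =>
      obtain ⟨j, rfl⟩ := Fin.exists_succ_eq.2 hij.symm
      rw [hv]
      exact hA (Fin.tail v) j
    | succ i =>
      cases j using Fin.cases with
      | zero =>
        rw [← hv]
        exact hA (Fin.tail v) i
      | succ j => exact (A (v 0)).map_eq_zero_of_eq _ hv (mt (congrArg Fin.succ) hij)

lemma alternating_apply_eq_zero_of_curryLeft {n : ℕ} {f : N [⋀^Fin (n + 1)]→ₗ[R] M} {x : N}
    (hf : f.curryLeft x = 0) (v : Fin (n + 1) → N) (j : Fin (n + 1)) (hj : v j = x) : f v = 0 := by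
  rw [← Fin.insertNth_self_removeNth j v, AlternatingMap.map_insertNth, hj]
  exact (congrArg _ (DFunLike.congr_fun hf _)).trans (smul_zero _)

private lemma neg_one_pow_smul_apply_cons_vecCons {n : ℕ} (f : N [⋀^Fin (n + 2)]→ₗ[R] M) (x y : N)
    (v : Fin (n + 2) → N) (i j : Fin (n + 2)) :
    (if i < j then (-1 : ℤ) ^ (i.val + 1 + (j.val + 1)) • f (Fin.cons y fun l =>
      Matrix.vecCons x v (i.succ.succAbove (j.succAbove l))) else 0) =
    -(if h : i < j then (-1 : ℤ) ^ (i.val + j.val) • f (Matrix.vecCons x (Fin.cons y fun l =>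
      v (i.succAbove ((j.pred (Fin.pos_iff_ne_zero.mp
        (lt_of_le_of_lt i.zero_le h))).succAbove l)))) else 0) := by
  split_ifs with h
  · obtain ⟨j, rfl⟩ := Fin.exists_succ_eq.2
      (Fin.pos_iff_ne_zero.mp (lt_of_le_of_lt i.zero_le h))
    have htail : (fun l => Matrix.vecCons x v (i.succ.succAbove (j.succ.succAbove l))) =
        Matrix.vecCons x (fun l => v (i.succAbove (j.succAbove l))) := by
      ext l
      cases l using Fin.cases <;> simp
    rw [htail, ← smul_neg, show i.val + 1 + (j.succ.val + 1) = i.val + j.succ.val + 2 by ring,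
      pow_add, neg_one_sq, mul_one]
    exact congrArg _ (DFunLike.congr_fun (curryLeft_curryLeft_swap f _ x) _)
  · exact neg_zero.symm

end Uncurry

section Differential

variable {k g M : Type*} [Field k] [LieRing g] [LieAlgebra k g]
  [AddCommGroup M] [Module k M] [LieRingModule g M] [LieModule k g M]

open AlternatingMap Matrix

lemma ceD_vecCons_zero (ψ : g [⋀^Fin 0]→ₗ[k] M) (x : g) (v : Fin 0 → g) :
    ceD k g M ψ (vecCons x v) = ⁅x, ψ⁆ v := by
  rw [cochain_zero_lie_apply, Subsingleton.elim v ![]]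
  rfl

lemma ceD_vecCons {n : ℕ} (ψ : g [⋀^Fin (n + 1)]→ₗ[k] M) (x : g) (v : Fin (n + 1) → g) :
    ceD k g M ψ (vecCons x v) = ⁅x, ψ⁆ v - ceD k g M (ψ.curryLeft x) v := by
  have hremove (i : Fin (n + 1)) :
      (fun l => vecCons x v (i.succ.succAbove l)) = vecCons x (fun l => v (i.succAbove l)) :=
    Fin.cons_comp_succ_succAbove x v i
  have hlie : ⁅x, ψ⁆ v = ⁅x, ψ v⁆ + ∑ i : Fin (n + 1), (-1 : ℤ) ^ (i.val + 1) •
      ψ (Fin.cons ⁅x, v i⁆ (fun l => v (i.succAbove l))) := by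
    rw [cochain_succ_lie_apply, sub_eq_add_neg, ← Finset.sum_neg_distrib]
    simp only [pow_succ, mul_neg_one, neg_smul]
    rfl
  rw [hlie]
  cases n with
  | zero =>
    have hempty : (fun l : Fin 0 => v l.succ) = ![] := Subsingleton.elim _ _
    simp only [ceD, Fin.sum_univ_succ, not_lt_zero, ↓reduceDIte, Finset.univ_unique,
      Fin.default_eq_zero, Fin.val_succ, Fin.val_eq_zero, zero_add, cons_val_succ, Fin.pred_succ,
      dite_eq_ite, Finset.sum_singleton, Fin.succ_zero_eq_one, Fin.lt_one_iff,
      Fin.zero_succAbove, Finset.sum_ite_eq', Finset.mem_univ, ↓reduceIte,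
      Fin.coe_ofNat_eq_mod, Nat.zero_mod, pow_one, cons_val_zero, hempty, Fin.cons_vecEmpty,
      neg_smul, one_smul, pow_zero, hremove, Finset.sum_neg_distrib, curryLeft_apply_apply,
      Finset.univ_eq_empty, Finset.sum_empty]
    abel
  | succ n =>
    simp only [ceD, Fin.sum_univ_succ (n := n + 2), not_lt_zero, ↓reduceDIte, Fin.val_succ,
      cons_val_succ, Fin.pred_succ, dite_eq_ite, zero_add, Fin.succ_pos, ↓reduceIte,
      Fin.coe_ofNat_eq_mod, Nat.zero_mod, pow_succ, mul_neg, mul_one, cons_val_zero,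
      Fin.zero_succAbove, neg_smul, Finset.sum_neg_distrib, Fin.succ_lt_succ_iff,
      neg_one_pow_smul_apply_cons_vecCons,
      pow_zero, one_smul, hremove, curryLeft_apply_apply]
    abel

lemma exists_alternatingMap_eq_ceD {n : ℕ} (ψ : g [⋀^Fin n]→ₗ[k] M) :
    ∃ f : g [⋀^Fin (n + 1)]→ₗ[k] M, ∀ v, f v = ceD k g M ψ v := by
  induction n with
  | zero =>
    refine ⟨alternatingUncurryLeft
      ((LieModule.toEnd k g (g [⋀^Fin 0]→ₗ[k] M) : g →ₗ[k] Module.End k _).flip ψ)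
      fun _ j => j.elim0, fun v => ?_⟩
    rw [← cons_head_tail v, ceD_vecCons_zero]
    rfl
  | succ n ih =>
    choose d hd using fun x => ih (ψ.curryLeft x)
    let A : g →ₗ[k] g [⋀^Fin (n + 1)]→ₗ[k] M :=
      { toFun x := ⁅x, ψ⁆ - d x
        map_add' x y := by
          ext v
          simp only [AlternatingMap.sub_apply, AlternatingMap.add_apply, hd, add_lie, map_add,
            ceD_add]
          abel
        map_smul' c x := by
          ext v
          simp only [AlternatingMap.sub_apply, AlternatingMap.smul_apply, hd, smul_lie, map_smul,
            ceD_smul, smul_sub, RingHom.id_apply] }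
    have hA (x : g) : (A x).curryLeft x = 0 := by
      ext v
      change ⁅x, ψ⁆.curryLeft x v - d x (vecCons x v) = 0
      rw [hd, curryLeft_lie, lie_self, _root_.map_zero, sub_zero]
      cases n with
      | zero => rw [ceD_vecCons_zero, sub_self]
      | succ n => rw [ceD_vecCons, curryLeft_same, ceD_zero, sub_zero, sub_self]
    refine ⟨alternatingUncurryLeft A fun v j =>
      alternating_apply_eq_zero_of_curryLeft (hA (v j)) v j rfl, fun v => ?_⟩
    rw [← cons_head_tail v, ceD_vecCons, ← hd]
    rfl

variable (k g M) in
/-- The Chevalley–Eilenberg differential `ceD` as a linear map between spaces of cochains. -/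
noncomputable def ceDiff (n : ℕ) : (g [⋀^Fin n]→ₗ[k] M) →ₗ[k] g [⋀^Fin (n + 1)]→ₗ[k] M where
  toFun ψ := (exists_alternatingMap_eq_ceD ψ).choose
  map_add' ψ φ := by
    ext v
    rw [AlternatingMap.add_apply, (exists_alternatingMap_eq_ceD (ψ + φ)).choose_spec,
      (exists_alternatingMap_eq_ceD ψ).choose_spec, (exists_alternatingMap_eq_ceD φ).choose_spec,
      ceD_add]
  map_smul' c ψ := by
    ext v
    rw [RingHom.id_apply, AlternatingMap.smul_apply,
      (exists_alternatingMap_eq_ceD (c • ψ)).choose_spec,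
      (exists_alternatingMap_eq_ceD ψ).choose_spec, ceD_smul]

lemma ceDiff_apply {n : ℕ} (ψ : g [⋀^Fin n]→ₗ[k] M) (v : Fin (n + 1) → g) :
    ceDiff k g M n ψ v = ceD k g M ψ v :=
  (exists_alternatingMap_eq_ceD ψ).choose_spec v

lemma curryLeft_ceDiff_zero (ψ : g [⋀^Fin 0]→ₗ[k] M) (x : g) :
    (ceDiff k g M 0 ψ).curryLeft x = ⁅x, ψ⁆ := by
  ext v
  rw [curryLeft_apply_apply, ceDiff_apply, ceD_vecCons_zero]

/-- Cartan's formula `ι_x ∘ d + d ∘ ι_x = L_x`. -/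
lemma curryLeft_ceDiff {n : ℕ} (ψ : g [⋀^Fin (n + 1)]→ₗ[k] M) (x : g) :
    (ceDiff k g M (n + 1) ψ).curryLeft x = ⁅x, ψ⁆ - ceDiff k g M n (ψ.curryLeft x) := by
  ext v
  rw [curryLeft_apply_apply, ceDiff_apply, ceD_vecCons, ← ceDiff_apply, AlternatingMap.sub_apply]

lemma ceDiff_lie {n : ℕ} (x : g) (ψ : g [⋀^Fin n]→ₗ[k] M) :
    ceDiff k g M n ⁅x, ψ⁆ = ⁅x, ceDiff k g M n ψ⁆ := by
  induction n with
  | zero =>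
    refine curryLeft_ext fun y => ?_
    rw [curryLeft_lie, curryLeft_ceDiff_zero, curryLeft_ceDiff_zero, curryLeft_ceDiff_zero,
      lie_lie]
    abel
  | succ n ih =>
    refine curryLeft_ext fun y => ?_
    rw [curryLeft_lie, curryLeft_ceDiff, curryLeft_ceDiff, curryLeft_ceDiff, curryLeft_lie,
      map_sub, lie_sub, ih, lie_lie]
    abel

lemma ceDiff_ceDiff {n : ℕ} (ψ : g [⋀^Fin n]→ₗ[k] M) :
    ceDiff k g M (n + 1) (ceDiff k g M n ψ) = 0 := by
  induction n with
  | zero =>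
    refine curryLeft_ext fun y => ?_
    rw [curryLeft_ceDiff, curryLeft_ceDiff_zero, ceDiff_lie, sub_self]
    rfl
  | succ n ih =>
    refine curryLeft_ext fun y => ?_
    rw [curryLeft_ceDiff, curryLeft_ceDiff, map_sub, ih, ceDiff_lie, sub_zero, sub_self]
    rfl

end Differential

section Basis

open Module

variable {R V M ι : Type*} [CommRing R] [AddCommGroup V] [Module R V] [AddCommGroup M] [Module R M]
  [LinearOrder ι] {n : ℕ}

lemma alternatingMap_ext_strictMono (b : Basis ι R V) {f f' : V [⋀^Fin n]→ₗ[R] M}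
    (h : ∀ u : Fin n → ι, StrictMono u → f (b ∘ u) = f' (b ∘ u)) : f = f' := by
  refine Basis.ext_alternating b fun u hu => ?_
  have hsort := h _ <| (Tuple.monotone_sort u).strictMono_of_injective
    (hu.comp (Tuple.sort u).injective)
  rw [← Function.comp_assoc, f.map_perm, f'.map_perm] at hsort
  exact smul_left_cancel _ hsort

lemma exists_alternatingMap_apply_basis [Finite ι] (b : Basis ι R V) (c : (Fin n → ι) → M) :
    ∃ f : V [⋀^Fin n]→ₗ[R] M, ∀ u : Fin n → ι, StrictMono u → f (b ∘ u) = c u := by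
  let index := Set.powersetCard.ofFinEmbEquiv (n := n) (I := ι)
  refine ⟨((b.exteriorPower n).constr R (fun s => c (index.symm s))).compAlternatingMap
      (exteriorPower.ιMulti R n), fun u hu => ?_⟩
  have h := (b.exteriorPower n).constr_basis R (fun s => c (index.symm s))
    (index (OrderEmbedding.ofStrictMono u hu))
  rw [exteriorPower.basis_apply, exteriorPower.ιMulti_family] at h
  simpa [index] using h

end Basis

section Weight

open Module

section Ring

variable {R L M : Type*} [CommRing R] [LieRing L] [LieAlgebra R L] [AddCommGroup M] [Module R M]
  [LieRingModule L M] [LieModule R L M]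

lemma cochain_lie_apply_of_weight {n : ℕ} (h : L) (ψ : L [⋀^Fin n]→ₗ[R] M) {v : Fin n → L}
    {w : Fin n → ℤ} (hv : ∀ j, ⁅h, v j⁆ = w j • v j) :
    ⁅h, ψ⁆ v = ⁅h, ψ v⁆ - (∑ j, w j) • ψ v := by
  cases n with
  | zero => simp [cochain_zero_lie_apply]
  | succ n =>
    rw [cochain_succ_lie_apply, Finset.sum_smul]
    refine congrArg _ (Finset.sum_congr rfl fun j _ => ?_)
    have hfront : (-1 : ℤ) ^ (j : ℕ) • ψ (Matrix.vecCons (v j) (j.removeNth v)) = ψ v := by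
      rw [← AlternatingMap.map_insertNth, Fin.insertNth_self_removeNth]
    have hsmul := ψ.map_vecCons_smul (j.removeNth v) (w j : R) (v j)
    rw [Int.cast_smul_eq_zsmul, Int.cast_smul_eq_zsmul] at hsmul
    rw [hv, hsmul, smul_comm, hfront]

lemma cochain_toEnd_pow_apply_of_weight [LieModule.IsTrivial L M] {n : ℕ} (h : L) (m : ℕ)
    (ψ : L [⋀^Fin n]→ₗ[R] M) {v : Fin n → L} {w : Fin n → ℤ} (hv : ∀ j, ⁅h, v j⁆ = w j • v j) :
    (LieModule.toEnd R L _ h ^ m) ψ v = (-∑ j, w j) ^ m • ψ v := by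
  induction m with
  | zero => simp
  | succ m ih =>
    rw [pow_succ', Module.End.mul_apply, LieModule.toEnd_apply_apply,
      cochain_lie_apply_of_weight h _ hv, trivial_lie_zero, zero_sub, ih, smul_smul, ← neg_smul,
      neg_mul_eq_neg_mul, pow_succ']

lemma toEnd_pow_eq_self_of_weight {ι : Type*} [LinearOrder ι] [LieModule.IsTrivial L M]
    {p : ℕ} [hp : Fact p.Prime] [CharP R p] (b : Basis ι R L) {w : ι → ℤ} {h : L}
    (hw : ∀ i, ⁅h, b i⁆ = w i • b i) {n : ℕ} {ψ : L [⋀^Fin n]→ₗ[R] M}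
    (hψ : ∀ u : Fin n → ι, StrictMono u → (p : ℤ) ∣ ∑ j, w (u j) → ψ (b ∘ u) = 0) :
    (LieModule.toEnd R L _ h ^ (p - 1)) ψ = ψ := by
  refine alternatingMap_ext_strictMono b fun u hu => ?_
  rw [cochain_toEnd_pow_apply_of_weight h _ ψ (v := b ∘ u) (w := w ∘ u) fun j => hw (u j)]
  by_cases hdvd : (p : ℤ) ∣ ∑ j, w (u j)
  · rw [hψ u hu hdvd, smul_zero]
  · have hcoprime : IsCoprime (-∑ j, w (u j)) (p : ℤ) :=
      ((Nat.prime_iff_prime_int.1 hp.out).coprime_iff_not_dvd.2 hdvd).symm.neg_left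
    have hfermat := (CharP.intCast_eq_intCast R p).2
      (Int.ModEq.pow_card_sub_one_eq_one hp.out hcoprime)
    rw [Int.cast_one] at hfermat
    rw [← Int.cast_smul_eq_zsmul R]
    exact (congrArg (· • ψ (b ∘ u)) hfermat).trans (one_smul R _)

end Ring

variable {k g M : Type*} [Field k] [LieRing g] [LieAlgebra k g] [AddCommGroup M] [Module k M]
  [LieRingModule g M] [LieModule k g M]

lemma ceDiff_toEnd_pow (h : g) {n : ℕ} (m : ℕ) (ψ : g [⋀^Fin n]→ₗ[k] M) :
    ceDiff k g M n ((LieModule.toEnd k g _ h ^ m) ψ) =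
      (LieModule.toEnd k g _ h ^ m) (ceDiff k g M n ψ) := by
  induction m with
  | zero => rfl
  | succ m ih =>
    rw [pow_succ', pow_succ', Module.End.mul_apply, Module.End.mul_apply,
      LieModule.toEnd_apply_apply, LieModule.toEnd_apply_apply, ceDiff_lie, ih]

/-- By Fermat `L_h ^ (p - 1)` fixes such a cocycle `ψ`, and `L_h = d ι_h + ι_h d` then exhibits
`ψ = d (ι_h (L_h ^ (p - 2) ψ))`. -/
lemma exists_ceDiff_eq_of_weight {ι : Type*} [LinearOrder ι] [LieModule.IsTrivial g M]
    {p : ℕ} [hp : Fact p.Prime] [CharP k p] (b : Basis ι k g) {w : ι → ℤ} {h : g}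
    (hw : ∀ i, ⁅h, b i⁆ = w i • b i) {n : ℕ} {ψ : g [⋀^Fin (n + 1)]→ₗ[k] M}
    (hcocycle : ceDiff k g M (n + 1) ψ = 0)
    (hψ : ∀ u : Fin (n + 1) → ι, StrictMono u → (p : ℤ) ∣ ∑ j, w (u j) → ψ (b ∘ u) = 0) :
    ∃ φ, ceDiff k g M n φ = ψ := by
  obtain ⟨m, hm⟩ : ∃ m, p - 1 = m + 1 := ⟨p - 2, by have := hp.out.two_le; omega⟩
  have hpow := toEnd_pow_eq_self_of_weight b hw hψ
  set χ := (LieModule.toEnd k g _ h ^ m) ψ with hχ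
  have hχ_cocycle : ceDiff k g M (n + 1) χ = 0 := by
    rw [hχ, ceDiff_toEnd_pow, hcocycle, map_zero]
  have hcartan := curryLeft_ceDiff χ h
  refine ⟨χ.curryLeft h, ?_⟩
  rw [hχ_cocycle, AlternatingMap.curryLeft_zero, LinearMap.zero_apply] at hcartan
  rw [← sub_eq_zero.1 hcartan.symm, ← hpow, hm, pow_succ']
  rfl

end Weight

section LowDegree

variable {k g M : Type*} [Field k] [LieRing g] [LieAlgebra k g] [AddCommGroup M] [Module k M]
  [LieRingModule g M] [LieModule k g M]

lemma cochain_lie_vecCons {n : ℕ} (x y : g) (ψ : g [⋀^Fin (n + 1)]→ₗ[k] M) (v : Fin n → g) :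
    ⁅x, ψ⁆ (Matrix.vecCons y v) = ⁅x, ψ.curryLeft y⁆ v - ψ (Matrix.vecCons ⁅x, y⁆ v) :=
  DFunLike.congr_fun (curryLeft_lie x y ψ) v

lemma ceDiff_vecCons_zero (ψ : g [⋀^Fin 0]→ₗ[k] M) (x : g) (v : Fin 0 → g) :
    ceDiff k g M 0 ψ (Matrix.vecCons x v) = ⁅x, ψ⁆ v :=
  DFunLike.congr_fun (curryLeft_ceDiff_zero ψ x) v

lemma ceDiff_vecCons {n : ℕ} (ψ : g [⋀^Fin (n + 1)]→ₗ[k] M) (x : g) (v : Fin (n + 1) → g) :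
    ceDiff k g M (n + 1) ψ (Matrix.vecCons x v) = ⁅x, ψ⁆ v - ceDiff k g M n (ψ.curryLeft x) v :=
  DFunLike.congr_fun (curryLeft_ceDiff ψ x) v

lemma ceDiff_curryLeft_apply_eq_zero {n : ℕ} {χ : g [⋀^Fin (n + 1)]→ₗ[k] M}
    (hχ : ceDiff k g M (n + 1) χ = 0) {a : g} {v : Fin (n + 1) → g} (ha : ⁅a, χ⁆ v = 0) :
    ceDiff k g M n (χ.curryLeft a) v = 0 := by
  have h := ceDiff_vecCons χ a v
  rwa [hχ, ha, zero_sub, AlternatingMap.zero_apply, zero_eq_neg] at h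

variable [LieModule.IsTrivial g M]

lemma ceDiff_apply_three (θ : g [⋀^Fin 2]→ₗ[k] M) (a b c : g) :
    ceDiff k g M 2 θ ![a, b, c] = -θ ![⁅a, b⁆, c] - θ ![b, ⁅a, c⁆] + θ ![a, ⁅b, c⁆] := by
  simp only [ceDiff_vecCons, ceDiff_vecCons_zero, cochain_lie_vecCons, cochain_zero_lie_apply,
    trivial_lie_zero, AlternatingMap.curryLeft_apply_apply]
  abel

lemma ceDiff_apply_four (η : g [⋀^Fin 3]→ₗ[k] M) (a b c d : g) :
    ceDiff k g M 3 η ![a, b, c, d] =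
      -η ![⁅a, b⁆, c, d] - η ![b, ⁅a, c⁆, d] - η ![b, c, ⁅a, d⁆]
        + η ![a, ⁅b, c⁆, d] + η ![a, c, ⁅b, d⁆] - η ![a, b, ⁅c, d⁆] := by
  simp only [ceDiff_vecCons, ceDiff_vecCons_zero, cochain_lie_vecCons, cochain_zero_lie_apply,
    trivial_lie_zero, AlternatingMap.curryLeft_apply_apply]
  abel

end LowDegree

section Permutation

variable {R V M : Type*} [CommRing R] [AddCommGroup V] [Module R V] [AddCommGroup M] [Module R M]

lemma alternating_swap {n : ℕ} (η : V [⋀^Fin (n + 2)]→ₗ[R] M) (a b : V) (v : Fin n → V) :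
    η (Matrix.vecCons a (Matrix.vecCons b v)) = -η (Matrix.vecCons b (Matrix.vecCons a v)) :=
  DFunLike.congr_fun (curryLeft_curryLeft_swap η a b) v

lemma alternating_vecCons_self {n : ℕ} (η : V [⋀^Fin (n + 2)]→ₗ[R] M) (a : V) (v : Fin n → V) :
    η (Matrix.vecCons a (Matrix.vecCons a v)) = 0 :=
  DFunLike.congr_fun (η.curryLeft_same a) v

lemma alternating_vecCons_neg {n : ℕ} (η : V [⋀^Fin (n + 1)]→ₗ[R] M) (a : V) (v : Fin n → V) :
    η (Matrix.vecCons (-a) v) = -η (Matrix.vecCons a v) :=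
  DFunLike.congr_fun (map_neg η.curryLeft a) v

lemma alternating_rotate (η : V [⋀^Fin 3]→ₗ[R] M) (a b c : V) : η ![a, b, c] = η ![c, a, b] := by
  rw [alternating_swap η c a, ← neg_eq_iff_eq_neg]
  exact (alternating_swap (η.curryLeft a) c b ![]).symm

lemma alternating_cyclic (η : V [⋀^Fin 3]→ₗ[R] M) (x : Fin 3 → V) (m : Fin 3) :
    η ![x m, x (m + 1), x (m + 2)] = η ![x 0, x 1, x 2] := by
  fin_cases m
  · rfl
  · exact alternating_rotate η (x 1) (x 2) (x 0)
  · exact (alternating_rotate η (x 0) (x 1) (x 2)).symm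

lemma alternating_cyclic_of_ne (η : V [⋀^Fin 3]→ₗ[R] M) (x : Fin 3 → V) {m n : Fin 3}
    (hmn : m ≠ n) : η ![x m, x (n + 1), x (n + 2)] = 0 := by
  obtain rfl | rfl : m = n + 1 ∨ m = n + 2 := by revert m n; decide
  · exact η.map_eq_zero_of_eq (i := 0) (j := 1) _ rfl (by decide)
  · exact η.map_eq_zero_of_eq (i := 0) (j := 2) _ rfl (by decide)

lemma alternating_apply_pair_eq_zero {n : ℕ} {η : V [⋀^Fin (n + 2)]→ₗ[R] M} {x : Fin 3 → V}
    {v : Fin n → V} (h : ∀ m, η (Matrix.vecCons (x (m + 1)) (Matrix.vecCons (x (m + 2)) v)) = 0)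
    (i j : Fin 3) : η (Matrix.vecCons (x i) (Matrix.vecCons (x j) v)) = 0 := by
  obtain rfl | ⟨m, ⟨rfl, rfl⟩ | ⟨rfl, rfl⟩⟩ : i = j ∨
      ∃ m, (i = m + 1 ∧ j = m + 2) ∨ (i = m + 2 ∧ j = m + 1) := by revert i j; decide
  · exact alternating_vecCons_self η _ v
  · exact h m
  · rw [alternating_swap, h, neg_zero]

end Permutation

namespace sl3

open LieAlgebra.SpecialLinear

variable (k : Type*) [Field k]

/-- The elementary matrix `E i (i + 1)`, with indices modulo `3`. -/
def e (i : Fin 3) : sl3 k := single i (i + 1) (by revert i; decide) 1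

/-- The elementary matrix `E (i + 1) i`, with indices modulo `3`. -/
def f (i : Fin 3) : sl3 k := single (i + 1) i (by revert i; decide) 1

/-- The diagonal matrix `E i i - E (i + 1) (i + 1)`, with indices modulo `3`, written as the
commutator of `e i` and `f i`. -/
def coroot (i : Fin 3) : sl3 k := ⁅e k i, f k i⁆

/-- The identity matrix, which is traceless in characteristic `3` and spans the centre. -/
def z [CharP k 3] : sl3 k := ⟨1, by
  change Matrix.trace (1 : Matrix (Fin 3) (Fin 3) k) = 0
  simpa using CharP.cast_eq_zero k 3⟩

lemma two_eq_neg_one [CharP k 3] : (2 : k) = -1 := by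
  linear_combination (CharP.cast_eq_zero k 3 : ((3 : ℕ) : k) = 0)

lemma e_lie_e (i : Fin 3) : ⁅e k (i + 1), e k (i + 2)⁆ = f k i := by
  apply Subtype.ext
  fin_cases i <;> simp [e, f, Ring.lie_def]

lemma f_lie_f (i : Fin 3) : ⁅f k (i + 1), f k (i + 2)⁆ = -e k i := by
  apply Subtype.ext
  fin_cases i <;> simp [e, f, Ring.lie_def]

lemma e_lie_f {i j : Fin 3} (h : i ≠ j) : ⁅e k i, f k j⁆ = 0 := by
  apply Subtype.ext
  fin_cases i <;> fin_cases j <;> simp [e, f, Ring.lie_def] at h ⊢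

lemma val_coroot (i : Fin 3) :
    (coroot k i).val = Matrix.single i i 1 - Matrix.single (i + 1) (i + 1) 1 := by
  simp [coroot, e, f, Ring.lie_def]

variable [CharP k 3]

lemma coroot_zero_lie_e (j : Fin 3) : ⁅coroot k 0, e k j⁆ = -e k j := by
  have h2 : (1 : k) + 1 = -1 := by rw [one_add_one_eq_two, two_eq_neg_one]
  apply Subtype.ext
  fin_cases j <;> simp [e, val_coroot, Ring.lie_def, sub_mul, mul_sub, ← Matrix.single_add, h2,
    ← Matrix.single_neg]

lemma coroot_zero_lie_f (j : Fin 3) : ⁅coroot k 0, f k j⁆ = f k j := by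
  have h2 : (1 : k) + 1 = -1 := by rw [one_add_one_eq_two, two_eq_neg_one]
  have hsingle : -Matrix.single 1 0 (1 : k) - Matrix.single 1 0 1 =
      (Matrix.single 1 0 1 : Matrix (Fin 3) (Fin 3) k) := by
    rw [sub_eq_iff_eq_add, ← Matrix.single_add, Matrix.single_neg, h2]
  apply Subtype.ext
  fin_cases j <;> simp [f, val_coroot, Ring.lie_def, sub_mul, mul_sub, hsingle]

lemma z_lie (x : sl3 k) : ⁅z k, x⁆ = 0 := by
  apply Subtype.ext
  simp [z, Ring.lie_def]

lemma coroot_add_one (i : Fin 3) : coroot k (i + 1) = coroot k i - z k := by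
  have h2 : (1 : k) = -1 - 1 := by linear_combination two_eq_neg_one k
  apply Subtype.ext
  fin_cases i <;> ext a b <;> fin_cases a <;> fin_cases b <;> simp [val_coroot, z, ← h2]

lemma coroot_two : coroot k 2 = coroot k 0 + z k := by
  rw [← sub_eq_iff_eq_add, ← coroot_add_one]
  rfl

/-- The coordinates of a traceless matrix in the basis consisting of `z`, `coroot 0`, the `e i` and
the `f i`. -/
def coordEquiv : sl3 k ≃ₗ[k] (Fin 8 → k) where
  toFun A := ![A.1 2 2, A.1 0 0 - A.1 2 2, A.1 0 1, A.1 1 2, A.1 2 0, A.1 1 0, A.1 2 1, A.1 0 2]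
  map_add' A B := by
    ext i
    fin_cases i <;> simp [add_sub_add_comm]
  map_smul' c A := by
    ext i
    fin_cases i <;> simp [mul_sub]
  invFun c := c 0 • z k + c 1 • coroot k 0 + ∑ i, (![c 2, c 3, c 4] i • e k i) +
    ∑ i, (![c 5, c 6, c 7] i • f k i)
  left_inv A := by
    have htrace : Matrix.trace A.1 = 0 := A.2
    rw [Matrix.trace_fin_three] at htrace
    have hmiddle : A.1 2 2 + (A.1 2 2 - A.1 0 0) = A.1 1 1 := by
      linear_combination A.1 2 2 * two_eq_neg_one k - htrace
    apply Subtype.ext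
    ext i j
    fin_cases i <;> fin_cases j <;> simp [Fin.sum_univ_three, z, val_coroot, e, f, hmiddle]
  right_inv c := by
    ext i
    fin_cases i <;> simp [Fin.sum_univ_three, z, val_coroot, e, f]

lemma coordEquiv_symm_apply (c : Fin 8 → k) : (coordEquiv k).symm c =
    c 0 • z k + c 1 • coroot k 0 + ∑ i, (![c 2, c 3, c 4] i • e k i) +
      ∑ i, (![c 5, c 6, c 7] i • f k i) :=
  rfl

/-- A basis of weight vectors for `coroot 0`. -/
noncomputable def weightBasis : Module.Basis (Fin 8) k (sl3 k) :=
  .ofEquivFun (coordEquiv k)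

/-- The eigenvalues of `coroot 0` on `weightBasis`, lifted from `ZMod 3` to `ℤ`. -/
def weight : Fin 8 → ℤ := ![0, 0, -1, -1, -1, 1, 1, 1]

lemma weightBasis_apply (i : Fin 8) : weightBasis k i =
    ![z k, coroot k 0, e k 0, e k 1, e k 2, f k 0, f k 1, f k 2] i := by
  simp only [weightBasis, Module.Basis.coe_ofEquivFun, coordEquiv_symm_apply]
  fin_cases i <;> simp [Fin.sum_univ_three]

lemma weightBasis_apply_e (i : Fin 3) : weightBasis k (![2, 3, 4] i) = e k i := by
  rw [weightBasis_apply]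
  fin_cases i <;> rfl

lemma weightBasis_apply_f (i : Fin 3) : weightBasis k (![5, 6, 7] i) = f k i := by
  rw [weightBasis_apply]
  fin_cases i <;> rfl

lemma coroot_zero_lie_weightBasis (i : Fin 8) :
    ⁅coroot k 0, weightBasis k i⁆ = weight i • weightBasis k i := by
  have hz : ⁅coroot k 0, z k⁆ = 0 := by rw [← lie_skew, z_lie, neg_zero]
  rw [weightBasis_apply]
  fin_cases i <;> simp [weight, coroot_zero_lie_e, coroot_zero_lie_f, hz]

end sl3

namespace sl3

variable {k M : Type*} [Field k] [AddCommGroup M] [Module k M]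

lemma apply_e_e_f_f_eq_zero {χ : sl3 k [⋀^Fin 4]→ₗ[k] M}
    (hχ : ∀ m n, χ ![e k (m + 1), e k (m + 2), f k (n + 1), f k (n + 2)] = 0) (i j l m : Fin 3) :
    χ ![e k i, e k j, f k l, f k m] = 0 := by
  refine alternating_apply_pair_eq_zero (x := e k) (fun p => ?_) i j
  exact alternating_apply_pair_eq_zero (η := (χ.curryLeft _).curryLeft _) (x := f k) (hχ p) l m

variable (k) in
/-- The linear system for the values of a `3`-cochain on `coroot 0 ∧ e i ∧ f i` (the `c i`) and on
`z ∧ e i ∧ f i` (the `d i`). -/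
lemma exists_diagonal_coefficients [CharP k 3] (a : Fin 3 → M) (p q : M) :
    ∃ c d : Fin 3 → M,
      c 2 - d 2 + (c 1 + d 1) = a 0 ∧ c 0 + d 0 + c 2 = a 1 ∧ c 1 + (c 0 - d 0) = a 2 ∧
        -∑ i, c i = p ∧ -∑ i, d i = q := by
  have h3 : (3 : k) = 0 := by linear_combination two_eq_neg_one k
  let d₁ := ∑ i, a i - p
  let d₀ := -q - d₁
  refine ⟨![-p - a 0 + d₁, -p - a 1 + d₀, -p - a 2 - d₀], ![d₀, d₁, 0], ?_, ?_, ?_, ?_, ?_⟩ <;>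
    simp only [Fin.sum_univ_three, d₀, d₁, Matrix.cons_val]
  · linear_combination (norm := module) -h3 • p
  · linear_combination (norm := module) -h3 • p
  · linear_combination (norm := module) -h3 • p
  · linear_combination (norm := module) h3 • p
  · module

section CharThree

variable [CharP k 3]

lemma alternating_coroot_one {n : ℕ} (η : sl3 k [⋀^Fin (n + 1)]→ₗ[k] M)
    (v : Fin n → sl3 k) : η (Matrix.vecCons (coroot k 1) v) =
      η (Matrix.vecCons (coroot k 0) v) - η (Matrix.vecCons (z k) v) := by
  rw [show coroot k 1 = coroot k 0 - z k from coroot_add_one k 0]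
  exact DFunLike.congr_fun (map_sub η.curryLeft _ _) v

lemma alternating_coroot_two {n : ℕ} (η : sl3 k [⋀^Fin (n + 1)]→ₗ[k] M)
    (v : Fin n → sl3 k) : η (Matrix.vecCons (coroot k 2) v) =
      η (Matrix.vecCons (coroot k 0) v) + η (Matrix.vecCons (z k) v) := by
  rw [coroot_two]
  exact η.map_vecCons_add v _ _

lemma alternating_z_coroot {n : ℕ} (η : sl3 k [⋀^Fin (n + 2)]→ₗ[k] M) (r : Fin 3)
    (v : Fin n → sl3 k) : η (Matrix.vecCons (z k) (Matrix.vecCons (coroot k r) v)) =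
      η (Matrix.vecCons (z k) (Matrix.vecCons (coroot k 0) v)) := by
  have hone := alternating_coroot_one (η.curryLeft (z k)) v
  have htwo := alternating_coroot_two (η.curryLeft (z k)) v
  simp only [AlternatingMap.curryLeft_apply_apply, alternating_vecCons_self, sub_zero,
    add_zero] at hone htwo
  fin_cases r
  exacts [rfl, hone, htwo]

lemma alternating_coroot_zero_coroot_one {n : ℕ} (η : sl3 k [⋀^Fin (n + 2)]→ₗ[k] M)
    (v : Fin n → sl3 k) : η (Matrix.vecCons (coroot k 0) (Matrix.vecCons (coroot k 1) v)) =
      η (Matrix.vecCons (z k) (Matrix.vecCons (coroot k 0) v)) := by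
  rw [alternating_swap, alternating_coroot_one, alternating_vecCons_self, zero_sub, neg_neg]

lemma alternating_coroot_zero_coroot_two {n : ℕ} (η : sl3 k [⋀^Fin (n + 2)]→ₗ[k] M)
    (v : Fin n → sl3 k) : η (Matrix.vecCons (coroot k 0) (Matrix.vecCons (coroot k 2) v)) =
      -η (Matrix.vecCons (z k) (Matrix.vecCons (coroot k 0) v)) := by
  rw [alternating_swap, alternating_coroot_two, alternating_vecCons_self, zero_add]

lemma exists_cochain_apply (C D : Fin 3 → Fin 3 → M) :
    ∃ φ : sl3 k [⋀^Fin 3]→ₗ[k] M,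
      (∀ i j, φ ![coroot k 0, e k i, f k j] = C i j) ∧ (∀ i j, φ ![z k, e k i, f k j] = D i j) ∧
        φ ![e k 0, e k 1, e k 2] = 0 ∧ φ ![f k 0, f k 1, f k 2] = 0 := by
  let index : Fin 8 → Fin 3 := ![0, 0, 0, 1, 2, 0, 1, 2]
  obtain ⟨φ, hφ⟩ := exists_alternatingMap_apply_basis (weightBasis k) fun u : Fin 3 → Fin 8 =>
    (![D, C, 0, 0, 0, 0, 0, 0] : Fin 8 → Fin 3 → Fin 3 → M) (u 0) (index (u 1)) (index (u 2))
  have hφ' (p q r : Fin 8) (hpq : p < q) (hqr : q < r) :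
      φ ![weightBasis k p, weightBasis k q, weightBasis k r] =
        (![D, C, 0, 0, 0, 0, 0, 0] : Fin 8 → Fin 3 → Fin 3 → M) p (index q) (index r) := by
    have hu : StrictMono ![p, q, r] := by
      simp [StrictMono, Fin.forall_fin_succ, hpq, hqr, hpq.trans hqr]
    have hcomp : weightBasis k ∘ ![p, q, r] =
        ![weightBasis k p, weightBasis k q, weightBasis k r] := by
      funext j
      fin_cases j <;> rfl
    exact hcomp ▸ hφ _ hu
  have hef (i j : Fin 3) : (![2, 3, 4] : Fin 3 → Fin 8) i < ![5, 6, 7] j := by revert i j; decide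
  have he (i : Fin 3) : index (![2, 3, 4] i) = i := by revert i; decide
  have hf (i : Fin 3) : index (![5, 6, 7] i) = i := by revert i; decide
  refine ⟨φ, fun i j => ?_, fun i j => ?_, ?_, ?_⟩
  · have h := hφ' 1 (![2, 3, 4] i) (![5, 6, 7] j) (by revert i; decide) (hef i j)
    rwa [weightBasis_apply_e, weightBasis_apply_f, he, hf, weightBasis_apply] at h
  · have h := hφ' 0 (![2, 3, 4] i) (![5, 6, 7] j) (by revert i; decide) (hef i j)
    rwa [weightBasis_apply_e, weightBasis_apply_f, he, hf, weightBasis_apply] at h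
  · have h := hφ' 2 3 4 (by decide) (by decide)
    rwa [weightBasis_apply, weightBasis_apply, weightBasis_apply] at h
  · have h := hφ' 5 6 7 (by decide) (by decide)
    rwa [weightBasis_apply, weightBasis_apply, weightBasis_apply] at h

end CharThree

variable [LieRingModule (sl3 k) M] [LieModule k (sl3 k) M] [LieModule.IsTrivial (sl3 k) M]

lemma ceDiff_apply_e (θ : sl3 k [⋀^Fin 2]→ₗ[k] M) :
    ceDiff k (sl3 k) M 2 θ ![e k 0, e k 1, e k 2] = ∑ i, θ ![e k i, f k i] := by
  have h01 : ⁅e k 0, e k 1⁆ = f k 2 := e_lie_e k 2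
  have h12 : ⁅e k 1, e k 2⁆ = f k 0 := e_lie_e k 0
  have h02 : ⁅e k 0, e k 2⁆ = -f k 1 := by
    rw [← lie_skew]
    exact congrArg _ (e_lie_e k 1)
  have hneg : θ ![e k 1, -f k 1] = -θ ![e k 1, f k 1] :=
    alternating_vecCons_neg (θ.curryLeft (e k 1)) _ _
  rw [ceDiff_apply_three, h01, h12, h02, alternating_swap θ (f k 2), hneg, Fin.sum_univ_three]
  abel

lemma ceDiff_apply_e_e_f_f_self (η : sl3 k [⋀^Fin 3]→ₗ[k] M) (m : Fin 3) :
    ceDiff k (sl3 k) M 3 η ![e k (m + 1), e k (m + 2), f k (m + 1), f k (m + 2)] =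
      η ![coroot k (m + 1), e k (m + 2), f k (m + 2)] +
        η ![coroot k (m + 2), e k (m + 1), f k (m + 1)] +
        η ![e k 0, e k 1, e k 2] - η ![f k 0, f k 1, f k 2] := by
  have h12 : m + 1 ≠ m + 2 := by omega
  have hzero₁ (a b : sl3 k) : η ![a, 0, b] = 0 := η.map_coord_zero 1 rfl
  have hzero₂ (a b : sl3 k) : η ![a, b, 0] = 0 := η.map_coord_zero 2 rfl
  rw [ceDiff_apply_four, e_lie_e, f_lie_f, e_lie_f k h12, e_lie_f k h12.symm, hzero₁, hzero₂,
    alternating_cyclic η (f k), alternating_swap η (e k (m + 2)),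
    alternating_rotate η _ _ ⁅_, _⁆, alternating_rotate η _ _ (-_), alternating_vecCons_neg,
    alternating_cyclic η (e k), ← coroot, ← coroot]
  abel

lemma ceDiff_apply_e_e_f_f_of_ne (η : sl3 k [⋀^Fin 3]→ₗ[k] M) {m n : Fin 3} (hmn : m ≠ n) :
    ceDiff k (sl3 k) M 3 η ![e k (m + 1), e k (m + 2), f k (n + 1), f k (n + 2)] =
      -η ![coroot k (-(m + n)), e k n, f k m] := by
  have hzero₁ (a b : sl3 k) : η ![a, 0, b] = 0 := η.map_coord_zero 1 rfl
  have hzero₂ (a b : sl3 k) : η ![a, b, 0] = 0 := η.map_coord_zero 2 rfl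
  have heee : η ![e k (m + 1), e k (m + 2), -e k n] = 0 := by
    rw [alternating_rotate, alternating_vecCons_neg, alternating_cyclic_of_ne η (e k) hmn.symm,
      neg_zero]
  rw [ceDiff_apply_four, e_lie_e, f_lie_f, alternating_cyclic_of_ne η (f k) hmn, heee]
  have hn : n = m + 1 ∨ n = m + 2 := by omega
  have h10 : m + 1 ≠ m := by omega
  have h20 : m + 2 ≠ m := by omega
  have h12 : m + 1 ≠ m + 2 := by omega
  obtain rfl | rfl := hn
  · have h₁ : m + 1 + 1 = m + 2 := by omega
    have h₂ : m + 1 + 2 = m := by omega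
    have h₃ : -(m + (m + 1)) = m + 2 := by grind
    rw [h₁, h₂, h₃, e_lie_f k h12, e_lie_f k h10, e_lie_f k h20, hzero₁, hzero₂, hzero₂,
      alternating_swap η (e k (m + 1)), coroot]
    abel
  · have h₁ : m + 2 + 1 = m := by omega
    have h₂ : m + 2 + 2 = m + 1 := by omega
    have h₃ : -(m + (m + 2)) = m + 1 := by grind
    rw [h₁, h₂, h₃, e_lie_f k h10, e_lie_f k h20, e_lie_f k h12.symm, hzero₁, hzero₁, hzero₂,
      alternating_rotate η (e k (m + 2)), coroot]
    abel

lemma ceDiff_apply_cons_e (φ : sl3 k [⋀^Fin 3]→ₗ[k] M) {a : sl3 k}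
    (ha : ⁅a, φ⁆ ![e k 0, e k 1, e k 2] = 0) :
    ceDiff k (sl3 k) M 3 φ ![a, e k 0, e k 1, e k 2] = -∑ i, φ ![a, e k i, f k i] := by
  rw [ceDiff_vecCons, ha, zero_sub, ceDiff_apply_e]
  rfl

lemma apply_f_eq_of_cocycle {χ : sl3 k [⋀^Fin 4]→ₗ[k] M}
    (hχ : ceDiff k (sl3 k) M 4 χ = 0) {a : sl3 k}
    (ha : ∀ m, ⁅a, χ⁆ ![e k (m + 1), e k (m + 2), f k (m + 1), f k (m + 2)] = 0)
    (he : χ ![a, e k 0, e k 1, e k 2] = 0) (m : Fin 3) :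
    χ ![a, f k 0, f k 1, f k 2] = χ ![a, coroot k (m + 1), e k (m + 2), f k (m + 2)] +
      χ ![a, coroot k (m + 2), e k (m + 1), f k (m + 1)] := by
  have h := ceDiff_curryLeft_apply_eq_zero hχ (ha m)
  simp only [ceDiff_apply_e_e_f_f_self, AlternatingMap.curryLeft_apply_apply, he, add_zero] at h
  exact (sub_eq_zero.1 h).symm

variable [CharP k 3]

lemma z_lie_cochain {n : ℕ} (η : sl3 k [⋀^Fin n]→ₗ[k] M) : ⁅z k, η⁆ = 0 := by
  ext v
  rw [cochain_lie_apply_of_weight (w := 0) _ _ fun j => by rw [z_lie, Pi.zero_apply, zero_smul],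
    trivial_lie_zero]
  simp

lemma coroot_zero_lie_cochain_apply {n : ℕ} (η : sl3 k [⋀^Fin n]→ₗ[k] M)
    {v : Fin n → sl3 k} {w : Fin n → ℤ} (hv : ∀ j, ⁅coroot k 0, v j⁆ = w j • v j)
    (hw : 3 ∣ ∑ j, w j) : ⁅coroot k 0, η⁆ v = 0 := by
  rw [cochain_lie_apply_of_weight _ _ hv, trivial_lie_zero, ← Int.cast_smul_eq_zsmul k,
    (CharP.intCast_eq_zero_iff k 3 _).2 hw, zero_smul, sub_zero]

lemma coroot_zero_lie_cochain_apply_e (η : sl3 k [⋀^Fin 3]→ₗ[k] M) :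
    ⁅coroot k 0, η⁆ ![e k 0, e k 1, e k 2] = 0 := by
  refine coroot_zero_lie_cochain_apply η (w := ![-1, -1, -1]) (fun j => ?_) (by decide)
  fin_cases j <;> simp [coroot_zero_lie_e]

lemma coroot_zero_lie_cochain_apply_e_e_f_f (η : sl3 k [⋀^Fin 4]→ₗ[k] M)
    (i j l m : Fin 3) : ⁅coroot k 0, η⁆ ![e k i, e k j, f k l, f k m] = 0 := by
  refine coroot_zero_lie_cochain_apply η (w := ![-1, -1, 1, 1]) (fun j => ?_) (by decide)
  fin_cases j <;> simp [coroot_zero_lie_e, coroot_zero_lie_f]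

lemma exists_ceDiff_apply (A : Fin 3 → Fin 3 → M) (p q : M) :
    ∃ φ : sl3 k [⋀^Fin 3]→ₗ[k] M,
      (∀ m n, ceDiff k (sl3 k) M 3 φ
        ![e k (m + 1), e k (m + 2), f k (n + 1), f k (n + 2)] = A m n) ∧
      ceDiff k (sl3 k) M 3 φ ![coroot k 0, e k 0, e k 1, e k 2] = p ∧
      ceDiff k (sl3 k) M 3 φ ![z k, e k 0, e k 1, e k 2] = q := by
  obtain ⟨c, d, h₀, h₁, h₂, hp, hq⟩ := exists_diagonal_coefficients k (fun i => A i i) p q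
  obtain ⟨φ, hC, hD, he, hf⟩ := exists_cochain_apply (k := k)
    (fun i j => if i = j then c i else -A j i) (fun i j => if i = j then d i else 0)
  refine ⟨φ, fun m n => ?_, ?_, ?_⟩
  · rcases eq_or_ne m n with rfl | hmn
    · rw [ceDiff_apply_e_e_f_f_self, he, hf, add_zero, sub_zero]
      fin_cases m
      · simpa [alternating_coroot_one, alternating_coroot_two, hC, hD] using h₀
      · simpa [alternating_coroot_two, hC, hD] using h₁
      · simpa [alternating_coroot_one, hC, hD] using h₂
    · rw [ceDiff_apply_e_e_f_f_of_ne _ hmn]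
      generalize -(m + n) = r
      fin_cases r <;>
        simp [alternating_coroot_one, alternating_coroot_two, hC, hD, hmn.symm]
  · rw [ceDiff_apply_cons_e φ (coroot_zero_lie_cochain_apply_e φ), ← hp]
    simp [hC]
  · rw [ceDiff_apply_cons_e φ (by simp [z_lie_cochain]), ← hq]
    simp [hD]

lemma apply_z_coroot_e_f_of_ne {χ : sl3 k [⋀^Fin 4]→ₗ[k] M}
    (hχ : ceDiff k (sl3 k) M 4 χ = 0) {i j : Fin 3} (hij : i ≠ j) :
    χ ![z k, coroot k 0, e k i, f k j] = 0 := by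
  have h := ceDiff_curryLeft_apply_eq_zero hχ (a := z k)
    (v := ![e k (j + 1), e k (j + 2), f k (i + 1), f k (i + 2)]) (by simp [z_lie_cochain])
  rw [ceDiff_apply_e_e_f_f_of_ne _ hij.symm, neg_eq_zero] at h
  rw [← alternating_z_coroot χ]
  exact h

lemma apply_weight_zero_of_cocycle {χ : sl3 k [⋀^Fin 4]→ₗ[k] M}
    (hχ : ceDiff k (sl3 k) M 4 χ = 0) (hh : χ ![coroot k 0, e k 0, e k 1, e k 2] = 0)
    (hz : χ ![z k, e k 0, e k 1, e k 2] = 0) :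
    (∀ i, χ ![z k, coroot k 0, e k i, f k i] = 0) ∧
      χ ![coroot k 0, f k 0, f k 1, f k 2] = 0 ∧ χ ![z k, f k 0, f k 1, f k 2] = 0 := by
  set B := fun i => χ ![z k, coroot k 0, e k i, f k i]
  have hFz (m : Fin 3) : χ ![z k, f k 0, f k 1, f k 2] = B (m + 2) + B (m + 1) := by
    rw [apply_f_eq_of_cocycle hχ (fun m => by simp [z_lie_cochain]) hz m,
      alternating_z_coroot χ (m + 1), alternating_z_coroot χ (m + 2)]
  have hFh := apply_f_eq_of_cocycle hχ
    (fun m => coroot_zero_lie_cochain_apply_e_e_f_f χ _ _ _ _) hh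
  have hFh₀ : χ ![coroot k 0, f k 0, f k 1, f k 2] = B 2 + -B 1 :=
    (hFh 0).trans <| congrArg₂ (· + ·) (alternating_coroot_zero_coroot_one χ _)
      (alternating_coroot_zero_coroot_two χ _)
  have hFh₁ : χ ![coroot k 0, f k 0, f k 1, f k 2] = -B 0 + 0 :=
    (hFh 1).trans <| congrArg₂ (· + ·) (alternating_coroot_zero_coroot_two χ _)
      (alternating_vecCons_self χ _ _)
  have hB₁₂ : B 1 = B 2 := add_right_cancel ((hFz 2).symm.trans ((hFz 1).trans (add_comm _ _)))
  have hB₀₁ : B 0 = B 1 := add_right_cancel ((hFz 1).symm.trans ((hFz 0).trans (add_comm _ _)))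
  have hFh_zero : χ ![coroot k 0, f k 0, f k 1, f k 2] = 0 := by
    rw [hFh₀, hB₁₂, add_neg_cancel]
  have hB₀ : B 0 = 0 := by rw [← neg_eq_zero, ← add_zero (-B 0), ← hFh₁, hFh_zero]
  have hB (i : Fin 3) : B i = 0 := by fin_cases i <;> simp [← hB₁₂, ← hB₀₁, hB₀]
  exact ⟨hB, hFh_zero, by rw [hFz 0, hB, hB, add_zero]⟩

set_option synthInstance.maxSize 1000 in
lemma exists_eq_of_three_dvd_weight (p q r s : Fin 8) (hpq : p < q) (hqr : q < r) (hrs : r < s)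
    (hw : (3 : ℤ) ∣ weight p + weight q + weight r + weight s) :
    (p = 0 ∧ q = 1 ∧ (∃ i, ![2, 3, 4] i = r) ∧ ∃ j, ![5, 6, 7] j = s) ∨
      ((p = 0 ∨ p = 1) ∧ q = 2 ∧ r = 3 ∧ s = 4) ∨ ((p = 0 ∨ p = 1) ∧ q = 5 ∧ r = 6 ∧ s = 7) ∨
      ((∃ i, ![2, 3, 4] i = p) ∧ (∃ j, ![2, 3, 4] j = q) ∧
        (∃ l, ![5, 6, 7] l = r) ∧ ∃ m, ![5, 6, 7] m = s) := by
  revert p q r s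
  decide

lemma apply_weightBasis_of_cocycle {χ : sl3 k [⋀^Fin 4]→ₗ[k] M}
    (hχ : ceDiff k (sl3 k) M 4 χ = 0)
    (hef : ∀ m n, χ ![e k (m + 1), e k (m + 2), f k (n + 1), f k (n + 2)] = 0)
    (hh : χ ![coroot k 0, e k 0, e k 1, e k 2] = 0) (hz : χ ![z k, e k 0, e k 1, e k 2] = 0)
    {u : Fin 4 → Fin 8} (hu : StrictMono u)
    (hw : (3 : ℤ) ∣ ∑ j, weight (u j)) : χ (weightBasis k ∘ u) = 0 := by
  obtain ⟨hB, hfh, hfz⟩ := apply_weight_zero_of_cocycle hχ hh hz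
  have hu_eq : weightBasis k ∘ u = ![weightBasis k (u 0), weightBasis k (u 1), weightBasis k (u 2),
      weightBasis k (u 3)] := by
    funext j
    fin_cases j <;> rfl
  have h₀ : weightBasis k 0 = z k := weightBasis_apply k 0
  have h₁ : weightBasis k 1 = coroot k 0 := weightBasis_apply k 1
  rw [Fin.sum_univ_four] at hw
  rw [hu_eq]
  obtain ⟨hp, hq, ⟨i, hr⟩, j, hs⟩ | ⟨hp, hq, hr, hs⟩ | ⟨hp, hq, hr, hs⟩ |
      ⟨⟨i, hp⟩, ⟨j, hq⟩, ⟨l, hr⟩, m, hs⟩ :=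
    exists_eq_of_three_dvd_weight _ _ _ _ (hu (by decide)) (hu (by decide)) (hu (by decide)) hw
  · rw [hp, hq, ← hr, ← hs, weightBasis_apply_e, weightBasis_apply_f, h₀, h₁]
    obtain rfl | hij := eq_or_ne i j
    · exact hB i
    · exact apply_z_coroot_e_f_of_ne hχ hij
  · simp only [hq, hr, hs, weightBasis_apply]
    rcases hp with hp | hp <;> rw [hp]
    exacts [hz, hh]
  · simp only [hq, hr, hs, weightBasis_apply]
    rcases hp with hp | hp <;> rw [hp]
    exacts [hfz, hfh]
  · rw [← hp, ← hq, ← hr, ← hs, weightBasis_apply_e, weightBasis_apply_e, weightBasis_apply_f,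
      weightBasis_apply_f]
    exact apply_e_e_f_f_eq_zero hef i j l m

end sl3

theorem H4_trivial_coeffs_vanishes_general (k M : Type*) [Field k] [CharP k 3] [AddCommGroup M]
    [Module k M] [LieRingModule (sl3 k) M] [LieModule k (sl3 k) M]
    [LieModule.IsTrivial (sl3 k) M] : Subsingleton (ceH k (sl3 k) M 4) := by
  have : Fact (Nat.Prime 3) := ⟨Nat.prime_three⟩
  refine Submodule.Quotient.subsingleton_iff.2 (eq_top_iff.2 ?_)
  rintro ⟨ψ, hψ⟩ -
  obtain ⟨φ, hφ, hφh, hφz⟩ := sl3.exists_ceDiff_apply (k := k)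
    (fun m n => ψ ![sl3.e k (m + 1), sl3.e k (m + 2), sl3.f k (n + 1), sl3.f k (n + 2)])
    (ψ ![sl3.coroot k 0, sl3.e k 0, sl3.e k 1, sl3.e k 2])
    (ψ ![sl3.z k, sl3.e k 0, sl3.e k 1, sl3.e k 2])
  have hψ' : ceDiff k (sl3 k) M 4 ψ = 0 :=
    AlternatingMap.ext fun v => (ceDiff_apply ψ v).trans (hψ v)
  have hcocycle : ceDiff k (sl3 k) M 4 (ψ - ceDiff k (sl3 k) M 3 φ) = 0 := by
    rw [map_sub, hψ', ceDiff_ceDiff, sub_zero]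
  obtain ⟨η, hη⟩ := exists_ceDiff_eq_of_weight (sl3.weightBasis k)
    (sl3.coroot_zero_lie_weightBasis k) hcocycle fun u hu hw =>
      sl3.apply_weightBasis_of_cocycle hcocycle (fun m n => sub_eq_zero.2 (hφ m n).symm)
        (sub_eq_zero.2 hφh.symm) (sub_eq_zero.2 hφz.symm) hu hw
  refine ⟨φ + η, fun v => ?_⟩
  rw [← ceDiff_apply, map_add, hη, add_sub_cancel]
  rfl

theorem H4_trivial_coeffs_vanishes (k : Type*) [Field k] [IsAlgClosed k] [CharP k 3] :
    Subsingleton (ceH k (sl3 k) k 4) :=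
  have : LieModule.IsTrivial (sl3 k) k := ⟨fun _ _ => rfl⟩
  H4_trivial_coeffs_vanishes_general k k
end
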